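/- arXiv:math/0301217 — 3 statements merged into one kernel-verified Lean document; each statement's English description precedes it below -/
import Mathlib

section
/- Let f be a continuous real-valued function on [-1,1] that is not identically zero, let β > 0, and let (n_j) be a strictly increasing sequence of positive integers with lim_{j→∞} n_{j+1}/n_j = +∞ such that E_{n_j}(f) ≤ e^{-β n_j} for every j. Assume moreover that 0 < m_f(E*_{n_j}(f)) < 1 for every j. Then lim_{j→∞} |log m_f(E*_{n_{j+1}}(f))| / |log m_f(E*_{n_j}(f))| = +∞. -/
open Filter MeasureTheory Set

/-- Best uniform approximation error by polynomials of degree ≤ n on [-1,1]. -/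
noncomputable def En (f : ℝ → ℝ) (n : ℕ) : ℝ :=
  sInf ((fun P : Polynomial ℝ => sSup ((fun x => |f x - P.eval x|) '' Set.Icc (-1:ℝ) 1)) ''
    {P : Polynomial ℝ | P.natDegree ≤ n})

/-- E*_n(f) = max(E_n(f), e^{-n}). -/
noncomputable def Estar (f : ℝ → ℝ) (n : ℕ) : ℝ := max (En f n) (Real.exp (-(n : ℝ)))

/-- m_f(t): the Lebesgue measure of {x ∈ [-1,1] : |f x| ≤ t}. -/
noncomputable def mf (f : ℝ → ℝ) (t : ℝ) : ℝ :=
  (volume {x : ℝ | x ∈ Set.Icc (-1:ℝ) 1 ∧ |f x| ≤ t}).toReal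


lemma bls_iter_comp (P : Polynomial ℝ) (a b : ℝ) (k : ℕ) :
    (Polynomial.derivative^[k] (P.comp (Polynomial.C a * Polynomial.X + Polynomial.C b))) =
      Polynomial.C (a ^ k) * (Polynomial.derivative^[k] P).comp
        (Polynomial.C a * Polynomial.X + Polynomial.C b) := by
  induction k with
  | zero => simp
  | succ k ih =>
    rw [Function.iterate_succ_apply', ih, Function.iterate_succ_apply']
    rw [Polynomial.derivative_C_mul, Polynomial.derivative_comp]
    simp only [Polynomial.derivative_add, Polynomial.derivative_C_mul, Polynomial.derivative_X,
      Polynomial.derivative_C, pow_succ, Polynomial.C_mul]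
    ring

lemma bls_T_bound (N k : ℕ) :
    (Polynomial.derivative^[k] (Polynomial.Chebyshev.T ℝ N)).eval 1 ≤
      (N : ℝ) ^ (2 * k) / (k.factorial : ℝ) := by
  by_cases hk : N < k
  · rw [Polynomial.iterate_derivative_eq_zero_of_degree_lt (by simp [hk])]
    simp; positivity
  push Not at hk
  rw [Polynomial.Chebyshev.iterate_derivative_T_eval_one_eq_div]
  have h1 : ∏ l ∈ Finset.range k, (((N : ℤ) : ℝ) ^ 2 - (l : ℝ) ^ 2) ≤ (N : ℝ) ^ (2 * k) := by
    rw [pow_mul]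
    calc _ ≤ ∏ l ∈ Finset.range k, ((N : ℝ) ^ 2) := by
          apply Finset.prod_le_prod
          · intro i hi
            have : (i : ℝ) ≤ N := by
              have := Finset.mem_range.1 hi
              exact_mod_cast (by omega : i ≤ N)
            have h0 : (0 : ℝ) ≤ i := by positivity
            push_cast
            nlinarith
          · intro i hi
            push_cast
            nlinarith [sq_nonneg (i : ℝ)]
      _ = _ := by simp
  have h2 : (k.factorial : ℝ) ≤ ∏ l ∈ Finset.range k, (2 * (l : ℝ) + 1) := by
    rw [← Finset.prod_range_add_one_eq_factorial]
    push_cast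
    apply Finset.prod_le_prod
    · intros; positivity
    · intro i _
      have h0 : (0 : ℝ) ≤ i := by positivity
      linarith
  have h3 : (0 : ℝ) < k.factorial := by positivity
  push_cast at h1 h2 ⊢
  gcongr

lemma bls_markov (P : Polynomial ℝ) (N k : ℕ) (M : ℝ) (hM : 0 < M) (hP : P.natDegree ≤ N)
    (hPM : ∀ x ∈ Icc (-1 : ℝ) 1, |P.eval x| ≤ M) (x : ℝ) (hx : x ∈ Icc (-1 : ℝ) 1) :
    |(Polynomial.derivative^[k] P).eval x| ≤ M * 2 ^ k * ((N : ℝ) ^ (2 * k) / (k.factorial : ℝ)) := by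
  obtain ⟨a, b, hab, ha, hmap⟩ : ∃ a b : ℝ, a + b = x ∧ 1 / 2 ≤ |a| ∧
      ∀ y ∈ Icc (-1 : ℝ) 1, a * y + b ∈ Icc (-1 : ℝ) 1 := by
    obtain ⟨hx1, hx2⟩ := hx
    rcases le_total 0 x with h | h
    · refine ⟨(1 + x) / 2, (x - 1) / 2, by ring, ?_, ?_⟩
      · rw [abs_of_nonneg (by linarith)]; linarith
      · rintro y ⟨h1, h2⟩
        constructor <;> nlinarith
    · refine ⟨(x - 1) / 2, (1 + x) / 2, by ring, ?_, ?_⟩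
      · rw [abs_of_nonpos (by linarith)]; linarith
      · rintro y ⟨h1, h2⟩
        constructor <;> nlinarith
  have key : ∀ σ : ℝ, |σ| = 1 → σ * a ^ k * (Polynomial.derivative^[k] P).eval x ≤
      M * ((N : ℝ) ^ (2 * k) / (k.factorial : ℝ)) := by
    intro σ hσ
    have h := Polynomial.Chebyshev.eval_iterate_derivative_le_of_forall_abs_le_one (n := N) (k := k)
      (P := (Polynomial.C (σ / M) * P).comp (Polynomial.C a * Polynomial.X + Polynomial.C b))
      (x := 1) le_rfl ?_ ?_
    · rw [bls_iter_comp] at h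
      have h' := h.trans (bls_T_bound N k)
      simp only [Polynomial.iterate_derivative_C_mul, Polynomial.eval_mul, Polynomial.eval_C,
        Polynomial.eval_comp, Polynomial.eval_add, Polynomial.eval_X, mul_one, hab] at h'
      rw [← div_le_iff₀' hM]
      refine le_trans (le_of_eq ?_) h'
      field_simp
    · refine Polynomial.degree_le_of_natDegree_le ?_
      refine Polynomial.natDegree_comp_le.trans ?_
      have h1 : (Polynomial.C (σ / M) * P).natDegree ≤ N :=
        (Polynomial.natDegree_C_mul_le _ _).trans hP
      have h2 : (Polynomial.C a * Polynomial.X + Polynomial.C b).natDegree ≤ 1 :=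
        Polynomial.natDegree_linear_le
      calc _ ≤ N * 1 := Nat.mul_le_mul h1 h2
        _ = N := mul_one _
    · intro y hy
      have := hPM _ (hmap y hy)
      simp only [Polynomial.eval_mul, Polynomial.eval_C,
        Polynomial.eval_comp, Polynomial.eval_add, Polynomial.eval_X]
      rw [abs_mul, abs_div, hσ, abs_of_pos hM, one_div, inv_mul_le_iff₀ hM]
      simpa using this
  have h1 := key 1 (by simp)
  have h2 := key (-1) (by simp)
  have h3 : |a| ^ k * |(Polynomial.derivative^[k] P).eval x| ≤
      M * ((N : ℝ) ^ (2 * k) / (k.factorial : ℝ)) := by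
    rw [← abs_pow, ← abs_mul, abs_le]
    constructor <;> linarith
  have h4 : (1 : ℝ) / 2 ^ k ≤ |a| ^ k := by
    rw [← one_div_pow]; gcongr
  have h5 : (1 : ℝ) / 2 ^ k * |(Polynomial.derivative^[k] P).eval x| ≤
      M * ((N : ℝ) ^ (2 * k) / (k.factorial : ℝ)) := le_trans (by gcongr) h3
  rw [div_mul_eq_mul_div, one_mul, div_le_iff₀ (by positivity)] at h5
  linarith

/-- generalized Rolle -/
lemma bls_rolle (k : ℕ) : ∀ (g : Polynomial ℝ) (z : ℕ → ℝ), (∀ i < k, z i < z (i + 1)) →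
    (∀ i ≤ k, g.eval (z i) = 0) →
    ∃ ξ ∈ Icc (z 0) (z k), (Polynomial.derivative^[k] g).eval ξ = 0 := by
  induction k with
  | zero => intro g z _ h; exact ⟨z 0, by simp, by simpa using h 0 le_rfl⟩
  | succ k ih =>
    intro g z hz h
    have : ∀ i, ∃ w, i ≤ k → w ∈ Ioo (z i) (z (i + 1)) ∧ g.derivative.eval w = 0 := by
      intro i
      by_cases hi : i ≤ k
      · obtain ⟨c, hc, hc'⟩ := exists_hasDerivAt_eq_zero (f := fun x => g.eval x)
          (f' := fun x => g.derivative.eval x) (hz i (by omega)) g.continuous.continuousOn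
          (by rw [h i (by omega), h (i + 1) (by omega)]) (fun x _ => g.hasDerivAt x)
        exact ⟨c, fun _ => ⟨hc, hc'⟩⟩
      · exact ⟨0, fun h => absurd h hi⟩
    choose w hw using this
    obtain ⟨ξ, hξ, hξ'⟩ := ih g.derivative w
      (fun i hi => ((hw i hi.le).1.2).trans (hw (i + 1) hi).1.1) (fun i hi => (hw i hi).2)
    refine ⟨ξ, ⟨(hw 0 (by omega)).1.1.le.trans hξ.1, hξ.2.trans (hw k le_rfl).1.2.le⟩, ?_⟩
    rwa [Function.iterate_succ_apply]

lemma bls_rolle_finset (g : Polynomial ℝ) (S : Finset ℝ) (k : ℕ) (hS : S.card = k + 1) (a c : ℝ)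
    (hac : ∀ x ∈ S, x ∈ Icc a c) (h : ∀ x ∈ S, g.eval x = 0) :
    ∃ ξ ∈ Icc a c, (Polynomial.derivative^[k] g).eval ξ = 0 := by
  let z : ℕ → ℝ := fun i => if hi : i < k + 1 then S.orderEmbOfFin hS ⟨i, hi⟩ else 0
  have hz : ∀ i (hi : i ≤ k), z i = S.orderEmbOfFin hS ⟨i, by omega⟩ := by
    intro i hi
    simp only [z]; rw [dif_pos (by omega)]
  have hzS : ∀ i ≤ k, z i ∈ S := by
    intro i hi
    rw [hz i hi]; exact Finset.orderEmbOfFin_mem _ _ _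
  obtain ⟨ξ, hξ, h0⟩ := bls_rolle k g z
    (by
      intro i hi
      rw [hz i hi.le, hz (i + 1) hi]
      exact (S.orderEmbOfFin hS).strictMono (by simp))
    (fun i hi => h _ (hzS i hi))
  exact ⟨ξ, ⟨(hac _ (hzS 0 (by omega))).1.trans hξ.1, hξ.2.trans (hac _ (hzS k le_rfl)).2⟩, h0⟩

lemma bls_remainder (P : Polynomial ℝ) (k : ℕ) (y : ℕ → ℝ)
    (hy : Set.InjOn y (Finset.range k : Set ℕ)) (a c x : ℝ)
    (hya : ∀ i < k, y i ∈ Icc a c) (hx : x ∈ Icc a c) :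
    ∃ ξ ∈ Icc a c, P.eval x - (Lagrange.interpolate (Finset.range k) y (fun i => P.eval (y i))).eval x
      = (Polynomial.derivative^[k] P).eval ξ / k.factorial * ∏ i ∈ Finset.range k, (x - y i) := by
  classical
  set I := Lagrange.interpolate (Finset.range k) y (fun i => P.eval (y i)) with hI
  have hIn : ∀ i < k, I.eval (y i) = P.eval (y i) := fun i hi =>
    Lagrange.eval_interpolate_at_node _ hy (by simpa using hi)
  by_cases hxy : ∃ i < k, x = y i
  · obtain ⟨i, hi, rfl⟩ := hxy
    refine ⟨y i, hx, ?_⟩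
    rw [hIn i hi, Finset.prod_eq_zero (i := i) (by simpa using hi) (by simp)]
    simp
  push Not at hxy
  set W := ∏ i ∈ Finset.range k, (x - y i) with hW
  have hW0 : W ≠ 0 := Finset.prod_ne_zero_iff.2 fun i hi =>
    sub_ne_zero.2 (hxy i (by simpa using hi))
  set q : ℝ := (P.eval x - I.eval x) / W with hq
  let g : Polynomial ℝ := P - I - Polynomial.C q * Lagrange.nodal (Finset.range k) y
  let S : Finset ℝ := insert x ((Finset.range k).image y)
  have hcard : S.card = k + 1 := by
    rw [Finset.card_insert_of_notMem, Finset.card_image_of_injOn hy, Finset.card_range]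
    simp only [Finset.mem_image, Finset.mem_range, not_exists, not_and]
    intro i hi h
    exact hxy i hi h.symm
  obtain ⟨ξ, hξ, h0⟩ := bls_rolle_finset g S k hcard a c
    (by
      intro t ht
      simp only [S, Finset.mem_insert, Finset.mem_image, Finset.mem_range] at ht
      rcases ht with rfl | ⟨i, hi, rfl⟩
      · exact hx
      · exact hya i hi)
    (by
      intro t ht
      simp only [S, Finset.mem_insert, Finset.mem_image, Finset.mem_range] at ht
      rcases ht with rfl | ⟨i, hi, rfl⟩
      · simp only [g, Polynomial.eval_sub, Polynomial.eval_mul, Polynomial.eval_C,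
          Lagrange.eval_nodal, ← hW, hq]
        field_simp; ring
      · simp only [g, Polynomial.eval_sub, Polynomial.eval_mul, Polynomial.eval_C, hIn i hi,
          Lagrange.eval_nodal_at_node (Finset.mem_range.2 hi)]
        ring)
  refine ⟨ξ, hξ, ?_⟩
  have hId : Polynomial.derivative^[k] I = 0 :=
    Polynomial.iterate_derivative_eq_zero_of_degree_lt (by
      have := Lagrange.degree_interpolate_lt (fun i => P.eval (y i)) hy
      rwa [Finset.card_range] at this)
  have hnd : Polynomial.derivative^[k] (Lagrange.nodal (Finset.range k) y) =
      Polynomial.C (k.factorial : ℝ) := by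
    have hm : (Lagrange.nodal (Finset.range k) y).natDegree = k := by
      rw [Lagrange.natDegree_nodal, Finset.card_range]
    have hmon : (Lagrange.nodal (Finset.range k) y).Monic := Lagrange.nodal_monic
    have h1 : (Polynomial.derivative^[k] (Lagrange.nodal (Finset.range k) y)).natDegree ≤ 0 := by
      have := Polynomial.natDegree_iterate_derivative (Lagrange.nodal (Finset.range k) y) k
      omega
    rw [Polynomial.eq_C_of_natDegree_le_zero h1, Polynomial.coeff_iterate_derivative]
    have h2 : (Lagrange.nodal (Finset.range k) y).coeff k = 1 := by
      have := hmon.coeff_natDegree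
      rwa [hm] at this
    simp [h2, Nat.descFactorial_self]
  simp only [g, Polynomial.iterate_derivative_sub, Polynomial.iterate_derivative_C_mul, hId, hnd,
    Polynomial.eval_sub, Polynomial.eval_mul, Polynomial.eval_C, sub_zero] at h0
  have : (k.factorial : ℝ) ≠ 0 := by positivity
  have h1 : (Polynomial.derivative^[k] P).eval ξ = q * k.factorial := by linarith
  rw [h1, hq]
  field_simp


lemma bls_nodes (d : ℝ) (hd : 0 ≤ d) (k : ℕ) : ∀ E : Set ℝ, IsCompact E → k * d < volume.real E →
    ∃ y : ℕ → ℝ, (∀ i ≤ k, y i ∈ E) ∧ ∀ i j, i ≤ j → j ≤ k → ((j : ℝ) - i) * d ≤ y j - y i := by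
  induction k with
  | zero =>
    intro E hE h
    have hne : E.Nonempty := by
      rw [nonempty_iff_ne_empty]; rintro rfl; simp at h
    obtain ⟨x, hx⟩ := hne
    refine ⟨fun _ => x, fun _ _ => hx, ?_⟩
    intro i j h1 h2
    have : i = 0 ∧ j = 0 := by omega
    simp [this.1, this.2]
  | succ k ih =>
    intro E hE h
    have hne : E.Nonempty := by
      rw [nonempty_iff_ne_empty]; rintro rfl; simp at h
      nlinarith [(Nat.cast_nonneg k : (0 : ℝ) ≤ k)]
    have hmem := hE.sInf_mem hne
    set y0 := sInf E
    have hlow : ∀ x ∈ E, y0 ≤ x := fun x hx => csInf_le hE.bddBelow hx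
    have hsub : E ⊆ Icc y0 (y0 + d) ∪ (E ∩ Ici (y0 + d)) := by
      intro x hx
      rcases le_total x (y0 + d) with h | h
      · exact Or.inl ⟨hlow x hx, h⟩
      · exact Or.inr ⟨hx, h⟩
    have hE' : IsCompact (E ∩ Ici (y0 + d)) := hE.inter_right isClosed_Ici
    have hvol : volume.real E ≤ d + volume.real (E ∩ Ici (y0 + d)) := by
      calc volume.real E ≤ volume.real (Icc y0 (y0 + d) ∪ (E ∩ Ici (y0 + d))) :=
            measureReal_mono hsub
              ((isCompact_Icc.union hE').measure_lt_top.ne)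
        _ ≤ volume.real (Icc y0 (y0 + d)) + volume.real (E ∩ Ici (y0 + d)) :=
            measureReal_union_le _ _
        _ = _ := by rw [Real.volume_real_Icc]; simp [hd]
    obtain ⟨y, hyE, hy⟩ := ih _ hE' (by push_cast at h; linarith)
    refine ⟨fun i => Nat.casesOn i y0 y, ?_, ?_⟩
    · rintro (_ | i) hi
      · exact hmem
      · exact (hyE i (by omega)).1
    · rintro (_ | i) (_ | j) h1 h2
      · simp
      · have a1 := hy 0 j (by omega) (by omega)
        have a2 : y0 + d ≤ y 0 := (hyE 0 (by omega)).2
        push_cast at a1 ⊢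
        change _ ≤ y j - y0
        linarith
      · omega
      · have := hy i j (by omega) (by omega)
        push_cast
        linarith

lemma bls_prod_range (i : ℕ) : ∏ j ∈ Finset.range i, |(i : ℝ) - j| = i.factorial := by
  rw [← Finset.prod_range_reflect, ← Finset.prod_range_add_one_eq_factorial]
  push_cast
  apply Finset.prod_congr rfl
  intro j hj
  have hj := Finset.mem_range.1 hj
  have : ((i - 1 - j : ℕ) : ℝ) = i - 1 - j := by
    rw [Nat.cast_sub (by omega), Nat.cast_sub (by omega)]; simp
  rw [this, show (i : ℝ) - (i - 1 - j) = j + 1 by ring]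
  exact abs_of_nonneg (by positivity)

lemma bls_prod_erase (i m : ℕ) : ∏ j ∈ (Finset.range (i + m + 1)).erase i, |(i : ℝ) - j| =
    i.factorial * m.factorial := by
  induction m with
  | zero =>
    rw [add_zero, Finset.range_add_one, Finset.erase_insert (by simp), bls_prod_range]; simp
  | succ m ih =>
    rw [show i + (m + 1) + 1 = (i + m + 1) + 1 by ring, Finset.range_add_one,
      Finset.erase_insert_of_ne (by omega), Finset.prod_insert (by simp), ih, Nat.factorial_succ]
    push_cast
    rw [show (i : ℝ) - (i + m + 1) = -(m + 1) by ring, abs_neg, abs_of_nonneg (by positivity)]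
    ring

lemma bls_interp_bound (P : Polynomial ℝ) (κ : ℕ) (y : ℕ → ℝ) (a ℓ d τ x : ℝ) (hd : 0 < d)
    (hℓ : 0 < ℓ) (hτ : 0 ≤ τ)
    (hya : ∀ i ≤ κ, y i ∈ Icc a (a + ℓ)) (hx : x ∈ Icc a (a + ℓ))
    (hgap : ∀ i j, i ≤ j → j ≤ κ → ((j : ℝ) - i) * d ≤ y j - y i)
    (hP : ∀ i ≤ κ, |P.eval (y i)| ≤ τ) :
    |(Lagrange.interpolate (Finset.range (κ + 1)) y (fun i => P.eval (y i))).eval x| ≤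
      τ * (ℓ / d) ^ κ * (2 ^ κ / κ.factorial) := by
  have hgap' : ∀ i ≤ κ, ∀ j ≤ κ, |(i : ℝ) - j| * d ≤ |y i - y j| := by
    intro i hi j hj
    rcases le_total i j with h | h
    · have h1 := hgap i j h hj
      have h' : (i : ℝ) ≤ j := by exact_mod_cast h
      rw [abs_sub_comm, abs_of_nonneg (by linarith), abs_sub_comm (y i)]
      exact h1.trans (le_abs_self _)
    · have h1 := hgap j i h hi
      have h' : (j : ℝ) ≤ i := by exact_mod_cast h
      rw [abs_of_nonneg (by linarith)]
      exact h1.trans (le_abs_self _)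
  rw [Lagrange.interpolate_apply, Polynomial.eval_finsetSum]
  have hb : ∀ i ∈ Finset.range (κ + 1),
      |(Lagrange.basis (Finset.range (κ + 1)) y i).eval x| ≤
        (ℓ / d) ^ κ * ((κ.choose i : ℝ) / κ.factorial) := by
    intro i hi
    have hi' : i ≤ κ := by have := Finset.mem_range.1 hi; omega
    rw [Lagrange.basis, Polynomial.eval_prod, Finset.abs_prod]
    have h1 : ∏ j ∈ (Finset.range (κ + 1)).erase i,
        |(Lagrange.basisDivisor (y i) (y j)).eval x| ≤
        ∏ j ∈ (Finset.range (κ + 1)).erase i, ((ℓ / d) * |(i : ℝ) - j|⁻¹) := by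
      apply Finset.prod_le_prod
      · intros; positivity
      · intro j hj
        obtain ⟨hji, hj⟩ := Finset.mem_erase.1 hj
        have hj' : j ≤ κ := by have := Finset.mem_range.1 hj; omega
        simp only [Lagrange.basisDivisor, Polynomial.eval_mul, Polynomial.eval_C,
          Polynomial.eval_sub, Polynomial.eval_X, abs_mul, abs_inv]
        have hpos : 0 < |(i : ℝ) - j| :=
          abs_pos.2 (sub_ne_zero.2 (by exact_mod_cast Ne.symm hji))
        have h2 := hgap' i hi' j hj'
        have h3 : |x - y j| ≤ ℓ := by
          have := hya j hj'
          rw [abs_le]; constructor <;> linarith [this.1, this.2, hx.1, hx.2]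
        calc |y i - y j|⁻¹ * |x - y j| ≤ (|(i : ℝ) - j| * d)⁻¹ * ℓ := by gcongr
          _ = _ := by field_simp
    refine h1.trans (le_of_eq ?_)
    rw [Finset.prod_mul_distrib, Finset.prod_const, Finset.card_erase_of_mem hi, Finset.card_range,
      Finset.prod_inv_distrib]
    obtain ⟨m, rfl⟩ := Nat.exists_eq_add_of_le hi'
    rw [bls_prod_erase]
    have := Nat.add_choose_mul_factorial_mul_factorial i m
    have h2 : ((i + m).choose i : ℝ) * i.factorial * m.factorial = (i + m).factorial := by
      rw [← Nat.choose_symm_add] at this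
      exact_mod_cast this
    rw [← h2]
    have : (0 : ℝ) < (i + m).choose i := by exact_mod_cast Nat.choose_pos (by omega)
    simp only [Nat.add_sub_cancel]
    field_simp
  calc _ ≤ ∑ i ∈ Finset.range (κ + 1), |(Polynomial.C (P.eval (y i)) *
          Lagrange.basis (Finset.range (κ + 1)) y i).eval x| := Finset.abs_sum_le_sum_abs _ _
    _ ≤ ∑ i ∈ Finset.range (κ + 1), τ * ((ℓ / d) ^ κ * ((κ.choose i : ℝ) / κ.factorial)) := by
        apply Finset.sum_le_sum
        intro i hi
        rw [Polynomial.eval_mul, Polynomial.eval_C, abs_mul]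
        have hi' : i ≤ κ := by have := Finset.mem_range.1 hi; omega
        exact mul_le_mul (hP i hi') (hb i hi) (abs_nonneg _) hτ
    _ = _ := by
        rw [← Finset.mul_sum, ← Finset.mul_sum, ← Finset.sum_div]
        have : (∑ i ∈ Finset.range (κ + 1), (κ.choose i : ℝ)) = 2 ^ κ := by
          exact_mod_cast Nat.sum_range_choose κ
        rw [this]; ring

lemma bls_core (P : Polynomial ℝ) (N : ℕ) (M : ℝ) (hM : 0 < M) (hP : P.natDegree ≤ N)
    (hPM : ∀ x ∈ Icc (-1 : ℝ) 1, |P.eval x| ≤ M) (a ℓ : ℝ) (hℓ : 0 < ℓ) (ha : -1 ≤ a)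
    (haℓ : a + ℓ ≤ 1) (E : Set ℝ) (hE : IsCompact E) (hEJ : E ⊆ Icc a (a + ℓ)) (s : ℝ)
    (hs : 0 < s) (hs1 : s ≤ 1) (hsE : s * ℓ ≤ volume.real E) (b : ℝ)
    (hPE : ∀ x ∈ E, |P.eval x| ≤ 3 * Real.exp (-b * N)) (ε lam : ℝ) (hε : 0 < ε) (hlam : 0 ≤ lam)
    (hεs : ε * (1 + Real.log (2 / s)) ≤ b / 2) (hℓε : ℓ ≤ ε ^ 2 * Real.exp (-3 - lam))
    (x : ℝ) (hx : x ∈ Icc a (a + ℓ)) :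
    |P.eval x| ≤ 9 * Real.exp (-(b / 2) * N) + M * Real.exp (-(lam * ε) * N) := by
  set κ := ⌊ε * N⌋₊ with hκ
  have hκ1 : (κ : ℝ) ≤ ε * N := Nat.floor_le (by positivity)
  have hκ2 : ε * N ≤ ((κ + 1 : ℕ) : ℝ) := by push_cast; exact (Nat.lt_floor_add_one _).le
  have hK0 : (0 : ℝ) < ((κ + 1 : ℕ) : ℝ) := by positivity
  set d := s * ℓ / ((κ + 1 : ℕ) : ℝ) with hd
  have hd0 : 0 < d := by positivity
  obtain ⟨y, hyE, hgap⟩ := bls_nodes d hd0.le κ E hE (by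
    refine lt_of_lt_of_le ?_ hsE
    rw [hd, mul_div_assoc', div_lt_iff₀ hK0]
    push_cast
    have : 0 < s * ℓ := by positivity
    nlinarith)
  have hya : ∀ i ≤ κ, y i ∈ Icc a (a + ℓ) := fun i hi => hEJ (hyE i hi)
  have hinj : Set.InjOn y (Finset.range (κ + 1) : Set ℕ) := by
    have aux : ∀ i j, i < j → j ≤ κ → y i < y j := by
      intro i j hij hj
      have h1 := hgap i j hij.le hj
      have h2 : (i : ℝ) < j := by exact_mod_cast hij
      have : 0 < ((j : ℝ) - i) * d := mul_pos (by linarith) hd0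
      linarith
    intro i hi j hj hij
    simp only [Finset.coe_range, mem_Iio] at hi hj
    rcases lt_trichotomy i j with h | h | h
    · exact absurd hij (aux i j h (by omega)).ne
    · exact h
    · exact absurd hij (aux j i h (by omega)).ne'
  have hI := bls_interp_bound P κ y a ℓ d (3 * Real.exp (-b * N)) x hd0 hℓ (by positivity) hya hx
    hgap (fun i hi => hPE _ (hyE i hi))
  obtain ⟨ξ, hξ, hrem⟩ := bls_remainder P (κ + 1) y hinj a (a + ℓ) x
    (fun i hi => hya i (by omega)) hx
  set I := (Lagrange.interpolate (Finset.range (κ + 1)) y (fun i => P.eval (y i))).eval x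
  have hmain : |I| ≤ 9 * Real.exp (-(b / 2) * N) := by
    refine hI.trans ?_
    have h1 : ℓ / d = ((κ + 1 : ℕ) : ℝ) / s := by rw [hd]; field_simp
    have h2 : (((κ + 1 : ℕ) : ℝ)) ^ κ / κ.factorial ≤ Real.exp ((κ + 1 : ℕ) : ℝ) :=
      Real.pow_div_factorial_le_exp _ hK0.le κ
    have h3 : (ℓ / d) ^ κ * (2 ^ κ / κ.factorial) ≤ (2 / s) ^ κ * Real.exp ((κ + 1 : ℕ) : ℝ) := by
      calc (ℓ / d) ^ κ * (2 ^ κ / κ.factorial)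
          = (2 / s) ^ κ * ((((κ + 1 : ℕ) : ℝ)) ^ κ / κ.factorial) := by
            rw [h1, div_pow, div_pow]; ring
        _ ≤ _ := by gcongr
    have h4 : (2 / s) ^ κ = Real.exp (κ * Real.log (2 / s)) := by
      rw [mul_comm, Real.exp_mul, Real.exp_log (by positivity), Real.rpow_natCast]
    have hlog : 0 ≤ Real.log (2 / s) := by
      apply Real.log_nonneg
      rw [le_div_iff₀ hs]; linarith
    have h5 : (2 / s) ^ κ * Real.exp ((κ + 1 : ℕ) : ℝ) ≤ 3 * Real.exp ((b / 2) * N) := by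
      rw [h4, ← Real.exp_add]
      have h6 : (κ : ℝ) * (1 + Real.log (2 / s)) ≤ b / 2 * N := by
        calc (κ : ℝ) * (1 + Real.log (2 / s)) ≤ ε * N * (1 + Real.log (2 / s)) := by gcongr
          _ = ε * (1 + Real.log (2 / s)) * N := by ring
          _ ≤ _ := by gcongr
      calc _ ≤ Real.exp (1 + b / 2 * N) := by
            apply Real.exp_le_exp.2
            push_cast
            linarith
        _ = Real.exp 1 * Real.exp (b / 2 * N) := Real.exp_add _ _
        _ ≤ _ := by
            gcongr
            linarith [Real.exp_one_lt_d9]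
    calc 3 * Real.exp (-b * N) * (ℓ / d) ^ κ * (2 ^ κ / κ.factorial)
        = 3 * Real.exp (-b * N) * ((ℓ / d) ^ κ * (2 ^ κ / κ.factorial)) := by ring
      _ ≤ 3 * Real.exp (-b * N) * (3 * Real.exp ((b / 2) * N)) := by
          exact mul_le_mul_of_nonneg_left (h3.trans h5) (by positivity)
      _ = 9 * (Real.exp (-b * N) * Real.exp ((b / 2) * N)) := by ring
      _ = _ := by rw [← Real.exp_add]; congr 2; ring
  have herr : |P.eval x - I| ≤ M * Real.exp (-(lam * ε) * N) := by
    rw [hrem, abs_mul, abs_div, Finset.abs_prod]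
    have hfac : (0 : ℝ) < ((κ + 1).factorial : ℝ) := by positivity
    have h1 := bls_markov P N (κ + 1) M hM hP hPM ξ ⟨ha.trans hξ.1, hξ.2.trans haℓ⟩
    have h2 : ∏ i ∈ Finset.range (κ + 1), |x - y i| ≤ ℓ ^ (κ + 1) := by
      calc _ ≤ ∏ i ∈ Finset.range (κ + 1), ℓ := by
            apply Finset.prod_le_prod
            · intros; positivity
            · intro i hi
              have := hya i (by have := Finset.mem_range.1 hi; omega)
              rw [abs_le]; constructor <;> linarith [this.1, this.2, hx.1, hx.2]
        _ = _ := by simp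
    have h3 : (N : ℝ) ^ (κ + 1) / (κ + 1).factorial ≤ (Real.exp 1 / ε) ^ (κ + 1) := by
      have h4 := Real.pow_div_factorial_le_exp (((κ + 1 : ℕ) : ℝ)) hK0.le (κ + 1)
      have h5 : (N : ℝ) ≤ ((κ + 1 : ℕ) : ℝ) / ε := by
        rw [le_div_iff₀ hε]; linarith
      calc (N : ℝ) ^ (κ + 1) / (κ + 1).factorial
          ≤ (((κ + 1 : ℕ) : ℝ) / ε) ^ (κ + 1) / (κ + 1).factorial := by gcongr
        _ = (((κ + 1 : ℕ) : ℝ) ^ (κ + 1) / (κ + 1).factorial) / ε ^ (κ + 1) := by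
            rw [div_pow]; ring
        _ ≤ Real.exp ((κ + 1 : ℕ) : ℝ) / ε ^ (κ + 1) := by gcongr
        _ = _ := by rw [div_pow, ← Real.exp_nat_mul, mul_one]
    have h6 : 2 * (Real.exp 1 / ε) ^ 2 * ℓ ≤ Real.exp (-lam) := by
      calc 2 * (Real.exp 1 / ε) ^ 2 * ℓ
          ≤ 2 * (Real.exp 1 / ε) ^ 2 * (ε ^ 2 * Real.exp (-3 - lam)) := by gcongr
        _ = 2 * (Real.exp 1 ^ 2 * Real.exp (-3 - lam)) := by field_simp
        _ = 2 * Real.exp (-1) * Real.exp (-lam) := by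
            rw [← Real.exp_nat_mul, mul_assoc, ← Real.exp_add, ← Real.exp_add]
            congr 2; push_cast; ring
        _ ≤ 1 * Real.exp (-lam) := by
            gcongr
            have := Real.exp_neg_one_lt_d9
            linarith
        _ = _ := one_mul _
    calc |(Polynomial.derivative^[κ + 1] P).eval ξ| / |((κ + 1).factorial : ℝ)| *
          ∏ i ∈ Finset.range (κ + 1), |x - y i|
        ≤ (M * 2 ^ (κ + 1) * ((N : ℝ) ^ (2 * (κ + 1)) / ((κ + 1).factorial : ℝ))) /
            ((κ + 1).factorial : ℝ) * ℓ ^ (κ + 1) := by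
          rw [abs_of_pos hfac]; gcongr
      _ = M * (2 ^ (κ + 1) * ((N : ℝ) ^ (κ + 1) / (κ + 1).factorial) ^ 2 * ℓ ^ (κ + 1)) := by
          rw [div_pow, mul_comm 2 (κ + 1), pow_mul]; field_simp
      _ ≤ M * (2 ^ (κ + 1) * ((Real.exp 1 / ε) ^ (κ + 1)) ^ 2 * ℓ ^ (κ + 1)) := by gcongr
      _ = M * (2 * (Real.exp 1 / ε) ^ 2 * ℓ) ^ (κ + 1) := by
          rw [mul_pow, mul_pow, ← pow_mul, ← pow_mul, mul_comm (κ + 1) 2]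
      _ ≤ M * (Real.exp (-lam)) ^ (κ + 1) := by gcongr
      _ = M * Real.exp (((κ + 1 : ℕ) : ℝ) * -lam) := by rw [Real.exp_nat_mul]
      _ ≤ _ := by
          refine mul_le_mul_of_nonneg_left (Real.exp_le_exp.2 ?_) hM.le
          nlinarith
  calc |P.eval x| = |I + (P.eval x - I)| := by congr 1; ring
    _ ≤ |I| + |P.eval x - I| := abs_add_le _ _
    _ ≤ _ := by linarith

lemma bls_exists_poly (f : ℝ → ℝ) (hf : ContinuousOn f (Icc (-1 : ℝ) 1)) (N : ℕ) (δ : ℝ)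
    (h : En f N < δ) : ∃ P : Polynomial ℝ, P.natDegree ≤ N ∧
      ∀ x ∈ Icc (-1 : ℝ) 1, |f x - P.eval x| ≤ δ := by
  unfold En at h
  obtain ⟨_, ⟨P, hP, rfl⟩, hlt⟩ := exists_lt_of_csInf_lt (Set.Nonempty.image _ ⟨0, by simp⟩) h
  refine ⟨P, hP, fun x hx => ?_⟩
  have hbdd : BddAbove ((fun x => |f x - P.eval x|) '' Icc (-1 : ℝ) 1) :=
    (isCompact_Icc.image_of_continuousOn (hf.sub P.continuous.continuousOn).abs).bddAbove
  exact le_trans (le_csSup hbdd (mem_image_of_mem _ hx)) hlt.le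

lemma bls_fcore (f : ℝ → ℝ) (hf : ContinuousOn f (Icc (-1 : ℝ) 1)) (B b : ℝ) (hb : 0 < b)
    (hB : ∀ x ∈ Icc (-1 : ℝ) 1, |f x| ≤ B) (N : ℕ) (hEn : En f N ≤ Real.exp (-b * N))
    (a ℓ : ℝ) (hℓ : 0 < ℓ) (ha : -1 ≤ a)
    (haℓ : a + ℓ ≤ 1) (s t : ℝ) (ht : t ≤ Real.exp (-b * N))
    (hs : 0 < s) (hs1 : s ≤ 1)
    (hsE : s * ℓ ≤ volume.real {x : ℝ | x ∈ Icc a (a + ℓ) ∧ |f x| ≤ t})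
    (ε lam : ℝ) (hε : 0 < ε) (hlam : 0 ≤ lam)
    (hεs : ε * (1 + Real.log (2 / s)) ≤ b / 2) (hℓε : ℓ ≤ ε ^ 2 * Real.exp (-3 - lam))
    (x : ℝ) (hx : x ∈ Icc a (a + ℓ)) :
    |f x| ≤ 11 * Real.exp (-(b / 2) * N) + (B + 2) * Real.exp (-(lam * ε) * N) := by
  have hJ : Icc a (a + ℓ) ⊆ Icc (-1 : ℝ) 1 := Icc_subset_Icc ha haℓ
  have he : 0 < Real.exp (-b * N) := Real.exp_pos _
  have he1 : Real.exp (-b * N) ≤ 1 := by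
    apply Real.exp_le_one_iff.2
    have : (0 : ℝ) ≤ N := by positivity
    nlinarith
  obtain ⟨P, hPN, hP⟩ := bls_exists_poly f hf N (2 * Real.exp (-b * N)) (by linarith)
  have hB0 : 0 ≤ B := (abs_nonneg _).trans (hB 0 (by simp))
  have hE : IsCompact {x : ℝ | x ∈ Icc a (a + ℓ) ∧ |f x| ≤ t} := by
    have : IsClosed (Icc a (a + ℓ) ∩ (fun x => |f x|) ⁻¹' Iic t) :=
      ContinuousOn.preimage_isClosed_of_isClosed ((hf.mono hJ).abs) isClosed_Icc isClosed_Iic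
    exact isCompact_Icc.of_isClosed_subset this (fun x hx => hx.1)
  have h := bls_core P N (B + 2) (by linarith) hPN (by
      intro y hy
      have h1 := hP y hy
      have h2 := hB y hy
      have : |P.eval y| ≤ |f y| + |f y - P.eval y| := by
        have := abs_sub_abs_le_abs_sub (P.eval y) (f y)
        rw [abs_sub_comm] at this; linarith
      linarith) a ℓ hℓ ha haℓ _ hE (fun x hx => hx.1) s hs hs1 hsE b (by
      rintro y ⟨hy, hyt⟩
      have h1 := hP y (hJ hy)
      have : |P.eval y| ≤ |f y| + |f y - P.eval y| := by
        have := abs_sub_abs_le_abs_sub (P.eval y) (f y)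
        rw [abs_sub_comm] at this; linarith
      linarith) ε lam hε hlam hεs hℓε x hx
  have h1 := hP x (hJ hx)
  have h2 : |f x| ≤ |P.eval x| + |f x - P.eval x| := by
    have := abs_sub_abs_le_abs_sub (f x) (P.eval x)
    linarith
  have h3 : Real.exp (-b * N) ≤ Real.exp (-(b / 2) * N) := by
    apply Real.exp_le_exp.2
    have : (0 : ℝ) ≤ N := by positivity
    nlinarith
  linarith

lemma bls_mf (f : ℝ → ℝ) (t : ℝ) :
    mf f t = volume.real {x : ℝ | x ∈ Icc (-1 : ℝ) 1 ∧ |f x| ≤ t} := rfl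

lemma bls_fin (f : ℝ → ℝ) (a c t : ℝ) : volume {x : ℝ | x ∈ Icc a c ∧ |f x| ≤ t} ≠ ⊤ :=
  ((measure_mono (fun _ hx => hx.1)).trans_lt
    (isCompact_Icc (a := a) (b := c)).measure_lt_top).ne

lemma bls_avg (f : ℝ → ℝ) (t : ℝ) (q : ℕ) (hq : 0 < q) :
    ∃ a : ℝ, -1 ≤ a ∧ a + 2 / q ≤ 1 ∧
      mf f t / 2 * (2 / q) ≤ volume.real {x : ℝ | x ∈ Icc a (a + 2 / q) ∧ |f x| ≤ t} := by
  by_contra! hcon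
  have hq0 : (0 : ℝ) < q := by exact_mod_cast hq
  have hlt : ∀ i ∈ Finset.range q, volume.real {x : ℝ | x ∈ Icc (-1 + i * (2 / q) : ℝ)
      (-1 + i * (2 / q) + 2 / q) ∧ |f x| ≤ t} < mf f t / q := by
    intro i hi
    have h1 : ((i : ℝ) + 1) ≤ q := by
      have := Finset.mem_range.1 hi
      exact_mod_cast this
    have := hcon (-1 + i * (2 / q)) (by
      have : (0 : ℝ) ≤ i * (2 / q) := by positivity
      linarith) (by
      have : ((i : ℝ) + 1) * (2 / q) ≤ q * (2 / q) := by gcongr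
      have h2 : (q : ℝ) * (2 / q) = 2 := by field_simp
      linarith)
    refine this.trans_eq ?_
    field_simp
  have hcov : {x : ℝ | x ∈ Icc (-1 : ℝ) 1 ∧ |f x| ≤ t} ⊆ ⋃ i ∈ Finset.range q,
      {x : ℝ | x ∈ Icc (-1 + i * (2 / q) : ℝ) (-1 + i * (2 / q) + 2 / q) ∧ |f x| ≤ t} := by
    rintro x ⟨⟨hx1, hx2⟩, hx⟩
    have hnn : 0 ≤ (x + 1) * (q / 2) := mul_nonneg (by linarith) (by positivity)
    by_cases hx3 : x = 1
    · refine mem_biUnion (x := q - 1) (by simp; omega) ⟨⟨?_, ?_⟩, hx⟩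
      · rw [Nat.cast_sub hq]; push_cast
        have h2 : (q : ℝ) * (2 / q) = 2 := by field_simp
        have : 0 < (2 : ℝ) / q := by positivity
        nlinarith
      · rw [Nat.cast_sub hq]; push_cast
        have h2 : (q : ℝ) * (2 / q) = 2 := by field_simp
        nlinarith
    · have hx4 : x < 1 := lt_of_le_of_ne hx2 hx3
      have hfl1 := Nat.floor_le hnn
      have hfl2 := Nat.lt_floor_add_one ((x + 1) * ((q : ℝ) / 2))
      have e1 : (x + 1) * ((q : ℝ) / 2) * (2 / q) = x + 1 := by field_simp
      have hp : 0 < (2 : ℝ) / q := by positivity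
      refine mem_biUnion (x := ⌊(x + 1) * ((q : ℝ) / 2)⌋₊) ?_ ⟨⟨?_, ?_⟩, hx⟩
      · simp only [Finset.coe_range, mem_Iio]
        rw [Nat.floor_lt hnn]
        nlinarith
      · have := mul_le_mul_of_nonneg_right hfl1 hp.le
        linarith
      · have := mul_le_mul_of_nonneg_right hfl2.le hp.le
        linarith
  have hsum : mf f t ≤ ∑ i ∈ Finset.range q, volume.real {x : ℝ | x ∈ Icc (-1 + i * (2 / q) : ℝ)
      (-1 + i * (2 / q) + 2 / q) ∧ |f x| ≤ t} := by
    rw [bls_mf]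
    refine (measureReal_mono hcov ?_).trans (measureReal_biUnion_finset_le _ _)
    exact ((measure_biUnion_lt_top (Finset.finite_toSet _)
      (fun i _ => (bls_fin f _ _ t).lt_top))).ne
  have hsum2 : ∑ i ∈ Finset.range q, volume.real {x : ℝ | x ∈ Icc (-1 + i * (2 / q) : ℝ)
      (-1 + i * (2 / q) + 2 / q) ∧ |f x| ≤ t} < ∑ i ∈ Finset.range q, mf f t / q :=
    Finset.sum_lt_sum_of_nonempty (by simp; omega) hlt
  rw [Finset.sum_const, Finset.card_range, nsmul_eq_mul, mul_div_cancel₀ _ hq0.ne'] at hsum2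
  linarith

lemma bls_zero (f : ℝ → ℝ) (hf : ContinuousOn f (Icc (-1 : ℝ) 1)) (b : ℝ) (hb : 0 < b)
    (n : ℕ → ℕ) (hn : Tendsto n atTop atTop) (hEn : ∀ j, En f (n j) ≤ Real.exp (-b * (n j : ℝ)))
    (s : ℝ) (hs : 0 < s) (hs1 : s ≤ 1) :
    ∃ ℓ₀ > 0, ∀ a ℓ : ℝ, 0 < ℓ → ℓ ≤ ℓ₀ → -1 ≤ a → a + ℓ ≤ 1 →
      s * ℓ ≤ volume.real {x : ℝ | x ∈ Icc a (a + ℓ) ∧ |f x| ≤ 0} →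
      ∀ x ∈ Icc a (a + ℓ), f x = 0 := by
  have hlog : 0 ≤ Real.log (2 / s) := by
    apply Real.log_nonneg
    rw [le_div_iff₀ hs]; linarith
  set ε := b / 2 / (1 + Real.log (2 / s)) with hεd
  have hε : 0 < ε := by positivity
  refine ⟨ε ^ 2 * Real.exp (-3 - 1), by positivity, ?_⟩
  intro a ℓ hℓ hℓ0 ha haℓ hsE x hx
  obtain ⟨B, hB⟩ := (isCompact_Icc.image_of_continuousOn hf.abs).bddAbove
  have hB' : ∀ x ∈ Icc (-1 : ℝ) 1, |f x| ≤ B := fun x hx => hB (mem_image_of_mem _ hx)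
  have hnR : Tendsto (fun j => (n j : ℝ)) atTop atTop := tendsto_natCast_atTop_atTop.comp hn
  have hexp : ∀ c : ℝ, 0 < c → Tendsto (fun j => Real.exp (-c * (n j : ℝ))) atTop (nhds 0) := by
    intro c hc
    apply Real.tendsto_exp_atBot.comp
    exact hnR.const_mul_atTop_of_neg (by linarith)
  have hlim : Tendsto (fun j => 11 * Real.exp (-(b / 2) * (n j : ℝ)) +
      (B + 2) * Real.exp (-(1 * ε) * (n j : ℝ))) atTop (nhds (11 * 0 + (B + 2) * 0)) :=
    ((hexp (b / 2) (by positivity)).const_mul _).add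
      ((hexp (1 * ε) (by positivity)).const_mul _)
  have hle : |f x| ≤ 11 * 0 + (B + 2) * 0 := by
    refine ge_of_tendsto' hlim (fun j => ?_)
    exact bls_fcore f hf B b hb hB' (n j) (hEn j) a ℓ hℓ ha haℓ s 0 (Real.exp_pos _).le hs hs1 hsE
      ε 1 hε zero_le_one (le_of_eq (by rw [hεd]; field_simp)) hℓ0 x hx
  have : |f x| ≤ 0 := by simpa using hle
  exact abs_nonpos_iff.1 this

lemma bls_null (f : ℝ → ℝ) (hf : ContinuousOn f (Icc (-1 : ℝ) 1))
    (hf0 : ∃ x ∈ Set.Icc (-1:ℝ) 1, f x ≠ 0) (b : ℝ) (hb : 0 < b)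
    (n : ℕ → ℕ) (hn : Tendsto n atTop atTop) (hEn : ∀ j, En f (n j) ≤ Real.exp (-b * (n j : ℝ))) :
    mf f 0 = 0 := by
  by_contra hne
  have hμ : 0 < mf f 0 := lt_of_le_of_ne ENNReal.toReal_nonneg (Ne.symm hne)
  have hμ2 : mf f 0 ≤ 2 := by
    rw [bls_mf]
    calc _ ≤ volume.real (Icc (-1 : ℝ) 1) :=
          measureReal_mono (fun _ hx => hx.1) isCompact_Icc.measure_lt_top.ne
      _ = 2 := by rw [Real.volume_real_Icc]; norm_num
  obtain ⟨ℓ₀, hℓ₀, h0⟩ := bls_zero f hf b hb n hn hEn (mf f 0 / 2) (by linarith) (by linarith)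
  obtain ⟨q, hq⟩ := exists_nat_gt (2 / ℓ₀)
  have hq0 : (0 : ℝ) < q := lt_trans (by positivity) hq
  have hqℓ : 2 / (q : ℝ) ≤ ℓ₀ := by
    rw [div_lt_iff₀ hℓ₀] at hq
    rw [div_le_iff₀ hq0]; linarith
  obtain ⟨a, ha, haq, hav⟩ := bls_avg f 0 q (by exact_mod_cast hq0)
  have hz := h0 a (2 / q) (by positivity) hqℓ ha haq hav
  obtain ⟨ℓ₁, hℓ₁, h1⟩ := bls_zero f hf b hb n hn hEn (1 / 2) (by norm_num) (by norm_num)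
  have hext : ∀ u v p r : ℝ, -1 ≤ u → v ≤ 1 → u ≤ p → p < r → r ≤ v → v - u ≤ ℓ₁ →
      v - u ≤ 2 * (r - p) → (∀ x ∈ Icc p r, f x = 0) → ∀ x ∈ Icc u v, f x = 0 := by
    intro u v p r hu hv hup hpr hrv hℓ hdens hzero x hx
    refine h1 u (v - u) (by linarith) hℓ hu (by linarith) ?_ x (by simpa using hx)
    calc 1 / 2 * (v - u) ≤ r - p := by linarith
      _ = volume.real (Icc p r) := by rw [Real.volume_real_Icc, max_eq_left (by linarith)]
      _ ≤ _ := by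
        refine measureReal_mono ?_ (bls_fin f _ _ _)
        intro y hy
        refine ⟨⟨hup.trans hy.1, by linarith [hy.2]⟩, ?_⟩
        rw [hzero y hy]; simp
  set c := a + 2 / (q : ℝ) with hc
  have hac : a < c := by
    have : 0 < 2 / (q : ℝ) := by positivity
    linarith
  set w := min (c - a) (ℓ₁ / 2) with hw
  have hw0 : 0 < w := lt_min (by linarith) (by linarith)
  have hw1 : w ≤ c - a := min_le_left _ _
  have hw2 : w ≤ ℓ₁ / 2 := min_le_right _ _
  have hR : ∀ i : ℕ, ∀ x ∈ Icc a (min (c + i * w) 1), f x = 0 := by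
    intro i
    induction i with
    | zero => intro x hx; exact hz x ⟨hx.1, by simpa using hx.2.trans (min_le_left _ _)⟩
    | succ i ih =>
      intro x hx
      set r := min (c + i * w) 1 with hr
      by_cases hxr : x ≤ r
      · exact ih x ⟨hx.1, hxr⟩
      push Not at hxr
      have hx1 : x ≤ c + (i + 1) * w := by simpa using hx.2.trans (min_le_left _ _)
      have hx2 : x ≤ 1 := hx.2.trans (min_le_right _ _)
      have hrc : c ≤ r := le_min (by
        have : 0 ≤ (i : ℝ) * w := by positivity
        linarith) haq
      have hxrw : x ≤ r + w := by
        rcases min_choice (c + i * w) 1 with h | h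
        · rw [hr, h]; linarith
        · rw [hr, h]; linarith
      exact hext (r - w) x (r - w) r (by linarith) hx2 le_rfl (by linarith) hxr.le (by linarith)
        (by linarith) (fun y hy => ih y ⟨by linarith [hy.1], hy.2⟩) x ⟨by linarith, le_rfl⟩
  have hL : ∀ i : ℕ, ∀ x ∈ Icc (max (a - i * w) (-1)) c, f x = 0 := by
    intro i
    induction i with
    | zero => intro x hx; exact hz x ⟨by simpa using (le_max_left _ _).trans hx.1, hx.2⟩
    | succ i ih =>
      intro x hx
      set r := max (a - i * w) (-1) with hr
      by_cases hxr : r ≤ x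
      · exact ih x ⟨hxr, hx.2⟩
      push Not at hxr
      have hx1 : a - (i + 1) * w ≤ x := by simpa using (le_max_left _ _).trans hx.1
      have hx2 : -1 ≤ x := (le_max_right _ _).trans hx.1
      have hrc : r ≤ a := max_le (by
        have : 0 ≤ (i : ℝ) * w := by positivity
        linarith) ha
      have hxrw : r - w ≤ x := by
        rcases max_choice (a - i * w) (-1) with h | h
        · rw [hr, h]; linarith
        · rw [hr, h]; linarith
      exact hext x (r + w) r (r + w) hx2 (by linarith) hxr.le (by linarith) le_rfl (by linarith)
        (by linarith) (fun y hy => ih y ⟨hy.1, by linarith [hy.2]⟩) x ⟨le_rfl, by linarith⟩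
  obtain ⟨x, hx, hfx⟩ := hf0
  apply hfx
  obtain ⟨i, hi⟩ := exists_nat_gt (2 / w)
  rw [div_lt_iff₀ hw0] at hi
  rcases le_total a x with h | h
  · exact hR i x ⟨h, le_min (by linarith [hx.2]) hx.2⟩
  · exact hL i x ⟨max_le (by linarith [hx.1]) hx.1, by linarith⟩

lemma bls_tendsto (f : ℝ → ℝ) (hf : ContinuousOn f (Icc (-1 : ℝ) 1))
    (b : ℝ) (hb : 0 < b) (n : ℕ → ℕ) (hmono : StrictMono n) (h0 : mf f 0 = 0) :
    Tendsto (fun j => mf f (Real.exp (-b * (n j : ℝ)))) atTop (nhds 0) := by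
  have hnR : Tendsto (fun j => (n j : ℝ)) atTop atTop :=
    tendsto_natCast_atTop_atTop.comp hmono.tendsto_atTop
  have hexp : Tendsto (fun j => Real.exp (-b * (n j : ℝ))) atTop (nhds 0) := by
    apply Real.tendsto_exp_atBot.comp
    exact hnR.const_mul_atTop_of_neg (by linarith)
  have hcl : ∀ t : ℝ, IsClosed {x : ℝ | x ∈ Icc (-1 : ℝ) 1 ∧ |f x| ≤ t} := fun t =>
    hf.abs.preimage_isClosed_of_isClosed isClosed_Icc isClosed_Iic
  have hanti : Antitone (fun j => {x : ℝ | x ∈ Icc (-1 : ℝ) 1 ∧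
      |f x| ≤ Real.exp (-b * (n j : ℝ))}) := by
    intro i j hij x hx
    refine ⟨hx.1, hx.2.trans (Real.exp_le_exp.2 ?_)⟩
    have : (n i : ℝ) ≤ n j := by exact_mod_cast hmono.monotone hij
    nlinarith
  have hinter : (⋂ j, {x : ℝ | x ∈ Icc (-1 : ℝ) 1 ∧ |f x| ≤ Real.exp (-b * (n j : ℝ))}) =
      {x : ℝ | x ∈ Icc (-1 : ℝ) 1 ∧ |f x| ≤ 0} := by
    ext x
    simp only [mem_iInter, mem_setOf_eq]
    constructor
    · intro h
      exact ⟨(h 0).1, ge_of_tendsto' hexp (fun j => (h j).2)⟩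
    · intro h j
      exact ⟨h.1, h.2.trans (Real.exp_pos _).le⟩
  have key := tendsto_measure_iInter_atTop (μ := (volume : Measure ℝ))
    (fun j => (hcl (Real.exp (-b * (n j : ℝ)))).measurableSet.nullMeasurableSet) hanti
    ⟨0, bls_fin f _ _ _⟩
  rw [hinter] at key
  have := (ENNReal.tendsto_toReal (bls_fin f (-1) 1 0)).comp key
  change Tendsto _ _ (nhds (mf f 0)) at this
  rw [h0] at this
  exact this

lemma bls_mf_mono (f : ℝ → ℝ) {s t : ℝ} (h : s ≤ t) : mf f s ≤ mf f t := by
  rw [bls_mf, bls_mf]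
  exact measureReal_mono (fun x hx => ⟨hx.1, hx.2.trans h⟩) (bls_fin f _ _ _)

lemma bls_step (f : ℝ → ℝ) (hf : ContinuousOn f (Icc (-1 : ℝ) 1)) (B b : ℝ) (hb : 0 < b)
    (hB0 : 0 ≤ B)
    (hB : ∀ x ∈ Icc (-1 : ℝ) 1, |f x| ≤ B) (A : ℝ) (hA : 1 ≤ A) (k N : ℕ)
    (hEn : En f N ≤ Real.exp (-b * (N : ℝ))) (t : ℝ) (ht : t ≤ Real.exp (-b * (N : ℝ)))
    (m μ L : ℝ) (hm : 0 < m) (hmd : mf f (Estar f k) = m) (hμ : 0 < μ) (hμ1 : μ < 1)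
    (hμd : mf f t = μ) (hL : L = -Real.log m) (hL4 : 4 ≤ L)
    (hgrow : 64 * Real.exp 3 * (A + 1) ^ 2 / b ^ 2 * (L / 2) ^ 2 ≤ Real.exp (L / 2))
    (hN : Real.log (B + 13) + k ≤ b / (4 * (A + 1)) * N) :
    A * L ≤ -Real.log μ := by
  by_contra! hcon
  have hL0 : 0 < L := by linarith
  have hmL : m = Real.exp (-L) := by rw [hL, neg_neg, Real.exp_log hm]
  have hm1 : m < 1 := by rw [hmL, ← Real.exp_zero]; exact Real.exp_lt_exp.2 (by linarith)
  have hinv : 1 ≤ 1 / m := by rw [le_div_iff₀ hm]; linarith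
  set q := ⌊1 / m⌋₊ with hq
  have hq1 : 1 ≤ q := Nat.one_le_floor_iff _ |>.2 hinv
  have hq1' : (1 : ℝ) ≤ q := by exact_mod_cast hq1
  have hqa : (q : ℝ) ≤ 1 / m := Nat.floor_le (by positivity)
  have hqb : 1 / m < q + 1 := Nat.lt_floor_add_one _
  have hq0 : (0 : ℝ) < q := by linarith
  have hℓa : 2 * m ≤ 2 / (q : ℝ) := by
    rw [le_div_iff₀ hm] at hqa
    rw [le_div_iff₀ hq0]; linarith
  have hℓb : 2 / (q : ℝ) ≤ 4 * m := by
    rw [div_lt_iff₀ hm] at hqb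
    rw [div_le_iff₀ hq0]; nlinarith
  obtain ⟨a, ha, haq, hav⟩ := bls_avg f t q hq1
  rw [hμd] at hav
  set ε := b / (2 * (A + 1) * L) with hεd
  have hA1 : 0 < A + 1 := by linarith
  have hε : 0 < ε := by positivity
  have hlog : Real.log (2 / (μ / 2)) ≤ 3 + A * L := by
    have e : 2 / (μ / 2) = 4 / μ := by field_simp; norm_num
    rw [e, Real.log_div (by norm_num) hμ.ne']
    have := Real.log_le_sub_one_of_pos (show (0 : ℝ) < 4 by norm_num)
    linarith
  have hεs : ε * (1 + Real.log (2 / (μ / 2))) ≤ b / 2 := by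
    calc ε * (1 + Real.log (2 / (μ / 2))) ≤ ε * ((A + 1) * L) := by
          apply mul_le_mul_of_nonneg_left _ hε.le
          linarith
      _ = b / 2 := by rw [hεd]; field_simp
  have hlε : L / 2 * ε = b / (4 * (A + 1)) := by rw [hεd]; field_simp; norm_num
  have hℓε : 2 / (q : ℝ) ≤ ε ^ 2 * Real.exp (-3 - L / 2) := by
    refine hℓb.trans ?_
    have e1 : m = Real.exp (-3 - L / 2) * (Real.exp 3 / Real.exp (L / 2)) := by
      rw [hmL, ← Real.exp_sub, ← Real.exp_add]; congr 1; ring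
    have e2 : 4 * (Real.exp 3 / Real.exp (L / 2)) ≤ ε ^ 2 := by
      rw [hεd, ← mul_div_assoc, div_le_iff₀ (Real.exp_pos _)]
      calc 4 * Real.exp 3 = (b / (2 * (A + 1) * L)) ^ 2 *
            (64 * Real.exp 3 * (A + 1) ^ 2 / b ^ 2 * (L / 2) ^ 2) := by
            field_simp; norm_num
        _ ≤ _ := by gcongr
    calc 4 * m = (4 * (Real.exp 3 / Real.exp (L / 2))) * Real.exp (-3 - L / 2) := by
          rw [e1]; ring
      _ ≤ _ := by gcongr
  have hsub : ∀ x ∈ Icc a (a + 2 / (q : ℝ)), |f x| ≤ Estar f k := by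
    intro x hx
    have h := bls_fcore f hf B b hb hB N hEn a (2 / q) (by positivity) ha haq (μ / 2) t ht
      (by linarith) (by linarith) hav ε (L / 2) hε (by linarith) hεs hℓε x hx
    rw [hlε] at h
    have h2 : Real.exp (-(b / 2) * N) ≤ Real.exp (-(b / (4 * (A + 1))) * N) := by
      apply Real.exp_le_exp.2
      have : b / (4 * (A + 1)) ≤ b / 2 := by gcongr; linarith
      have hN0 : (0 : ℝ) ≤ N := by positivity
      nlinarith
    have h3 : |f x| ≤ (B + 13) * Real.exp (-(b / (4 * (A + 1))) * N) := by linarith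
    have h4 : (B + 13) * Real.exp (-(b / (4 * (A + 1))) * N) ≤ Real.exp (-(k : ℝ)) := by
      rw [← Real.exp_log (show 0 < B + 13 by linarith), ← Real.exp_add]
      apply Real.exp_le_exp.2
      linarith
    exact h3.trans (h4.trans (le_max_right _ _))
  have hfin : 2 / (q : ℝ) ≤ m := by
    rw [← hmd, bls_mf]
    calc 2 / (q : ℝ) = volume.real (Icc a (a + 2 / (q : ℝ))) := by
          rw [Real.volume_real_Icc, max_eq_left (by
            have : 0 < 2 / (q : ℝ) := by positivity
            linarith)]; ring
      _ ≤ volume.real {x : ℝ | x ∈ Icc (-1 : ℝ) 1 ∧ |f x| ≤ Estar f k} := by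
          refine measureReal_mono ?_ (bls_fin f _ _ _)
          exact fun x hx => ⟨⟨ha.trans hx.1, hx.2.trans haq⟩, hsub x hx⟩
  linarith

theorem bernstein_level_sets
    (f : ℝ → ℝ) (hf : ContinuousOn f (Set.Icc (-1:ℝ) 1))
    (hf0 : ∃ x ∈ Set.Icc (-1:ℝ) 1, f x ≠ 0)
    (β : ℝ) (hβ : 0 < β)
    (n : ℕ → ℕ) (hmono : StrictMono n) (hpos : ∀ j, 0 < n j)
    (hlac : Tendsto (fun j => (n (j+1) : ℝ) / (n j : ℝ)) atTop atTop)
    (happrox : ∀ j, En f (n j) ≤ Real.exp (-β * (n j : ℝ)))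
    (hm : ∀ j, 0 < mf f (Estar f (n j)) ∧ mf f (Estar f (n j)) < 1) :
    Tendsto (fun j => |Real.log (mf f (Estar f (n (j+1))))| /
      |Real.log (mf f (Estar f (n j)))|) atTop atTop := by
  set b := min β 1 with hbd
  have hb : 0 < b := lt_min hβ one_pos
  have hbβ : b ≤ β := min_le_left _ _
  have hb1 : b ≤ 1 := min_le_right _ _
  have hEn : ∀ j, En f (n j) ≤ Real.exp (-b * (n j : ℝ)) := by
    intro j
    refine (happrox j).trans (Real.exp_le_exp.2 ?_)
    have : (0 : ℝ) ≤ n j := by positivity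
    nlinarith
  have hEs : ∀ j, Estar f (n j) ≤ Real.exp (-b * (n j : ℝ)) := by
    intro j
    refine max_le (hEn j) (Real.exp_le_exp.2 ?_)
    have : (0 : ℝ) ≤ n j := by positivity
    nlinarith
  have hnull := bls_null f hf hf0 b hb n hmono.tendsto_atTop hEn
  have hm0 : Tendsto (fun j => mf f (Estar f (n j))) atTop (nhds 0) :=
    squeeze_zero (fun j => (hm j).1.le) (fun j => bls_mf_mono f (hEs j))
      (bls_tendsto f hf b hb n hmono hnull)
  have hLt : Tendsto (fun j => -Real.log (mf f (Estar f (n j)))) atTop atTop := by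
    apply tendsto_neg_atBot_atTop.comp
    apply Real.tendsto_log_nhdsGT_zero.comp
    exact tendsto_nhdsWithin_iff.2 ⟨hm0, Eventually.of_forall (fun j => (hm j).1)⟩
  obtain ⟨B, hB⟩ := (isCompact_Icc.image_of_continuousOn hf.abs).bddAbove
  have hB' : ∀ x ∈ Icc (-1 : ℝ) 1, |f x| ≤ B := fun x hx => hB (mem_image_of_mem _ hx)
  have hB0 : 0 ≤ B := (abs_nonneg _).trans (hB' 0 (by simp))
  have habs : ∀ j, |Real.log (mf f (Estar f (n j)))| = -Real.log (mf f (Estar f (n j))) :=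
    fun j => abs_of_neg (Real.log_neg (hm j).1 (hm j).2)
  rw [tendsto_atTop]
  intro A₀
  set A := max A₀ 1 with hAd
  have hA : 1 ≤ A := le_max_right _ _
  have hL2 : Tendsto (fun j => -Real.log (mf f (Estar f (n j))) / 2) atTop atTop :=
    hLt.atTop_div_const (by norm_num)
  have hg := ((Real.tendsto_exp_div_pow_atTop 2).comp hL2).eventually_ge_atTop
    (64 * Real.exp 3 * (A + 1) ^ 2 / b ^ 2)
  filter_upwards [hg, hLt.eventually_ge_atTop 4,
    hlac.eventually_ge_atTop ((Real.log (B + 13) + 1) / (b / (4 * (A + 1))))] with j h1 h2 h3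
  have hc : 0 < b / (4 * (A + 1)) := by positivity
  have hn1 : (1 : ℝ) ≤ n j := by exact_mod_cast hpos j
  have hlog0 : 0 ≤ Real.log (B + 13) := Real.log_nonneg (by linarith)
  have hstep := bls_step f hf B b hb hB0 hB' A hA (n j) (n (j + 1)) (hEn (j + 1))
    (Estar f (n (j + 1))) (hEs (j + 1)) _ _ _ (hm j).1 rfl (hm (j + 1)).1 (hm (j + 1)).2 rfl rfl h2
    (by
      rw [Function.comp_apply, le_div_iff₀ (pow_pos (by linarith) 2)] at h1
      exact h1)
    (by
      rw [div_le_div_iff₀ hc (by linarith)] at h3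
      nlinarith)
  rw [habs, habs, le_div_iff₀ (by linarith)]
  refine le_trans ?_ hstep
  exact mul_le_mul_of_nonneg_right (le_max_left _ _) (by linarith)
end

section
/- Let f be a continuous real-valued function on [-1,1] that is not identically zero, let β > 0, and let (n_j) be a strictly increasing sequence of positive integers with lim_{j→∞} n_{j+1}/n_j = +∞ such that E_{n_j}(f) ≤ e^{-β n_j} for every j. Assume moreover that 0 < m_f(E*_{n_j}(f)) < 1 for every j. Then lim_{j→∞} (log |log m_f(E*_{n_j}(f))|) / j = +∞. -/
open Filter MeasureTheory Set

lemma exists_jouk (z : ℂ) : ∃ w : ℂ, w ≠ 0 ∧ ‖w‖ ≤ 1 ∧ w ^ 2 + 1 = 2 * z * w := by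
  obtain ⟨s, hs⟩ := IsAlgClosed.exists_pow_nat_eq (z ^ 2 - 1) (n := 2) (by norm_num)
  have h1 : (z + s) * (z - s) = 1 := by linear_combination -hs
  have hn : ‖z + s‖ * ‖z - s‖ = 1 := by rw [← norm_mul, h1, norm_one]
  by_cases h : ‖z + s‖ ≤ 1
  · refine ⟨z + s, left_ne_zero_of_mul_eq_one h1, h, by linear_combination hs⟩
  · refine ⟨z - s, right_ne_zero_of_mul_eq_one h1, ?_, by linear_combination hs⟩
    push Not at h
    by_contra h2
    push Not at h2
    nlinarith

lemma jouk_lower (z w : ℂ) (r : ℝ) (hr : 0 < r) (hw0 : w ≠ 0) (hw : ‖w‖ ≤ 1)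
    (h : w ^ 2 + 1 = 2 * z * w) (hz : ‖z - 1‖ + ‖z + 1‖ ≤ 2 + 2 * r) :
    1 - √(2 * r) ≤ ‖w‖ := by
  have hp : 0 < ‖w‖ := norm_pos_iff.mpr hw0
  have e1 : ‖w - 1‖ ^ 2 = 2 * ‖z - 1‖ * ‖w‖ := by
    have : (w - 1) ^ 2 = 2 * (z - 1) * w := by linear_combination h
    rw [← norm_pow, this]; simp
  have e2 : ‖w + 1‖ ^ 2 = 2 * ‖z + 1‖ * ‖w‖ := by
    have : (w + 1) ^ 2 = 2 * (z + 1) * w := by linear_combination h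
    rw [← norm_pow, this]; simp
  have e3 : ‖w - 1‖ ^ 2 + ‖w + 1‖ ^ 2 = 2 * ‖w‖ ^ 2 + 2 := by
    have := parallelogram_law_with_norm ℝ w 1
    simp at this
    nlinarith
  have e4 : (1 - ‖w‖) ^ 2 ≤ 2 * r := by
    nlinarith
  have := Real.abs_le_sqrt e4
  have := le_abs_self (1 - ‖w‖)
  linarith

lemma bern_walsh (P : Polynomial ℂ) (n : ℕ) (hd : P.natDegree ≤ n) (M : ℝ)
    (hM : ∀ x : ℝ, x ∈ Icc (-1:ℝ) 1 → ‖P.eval (x : ℂ)‖ ≤ M) (r : ℝ) (hr : 0 < r)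
    (hr1 : √(2 * r) ≤ 1) (z : ℂ) (hz : ‖z - 1‖ + ‖z + 1‖ ≤ 2 + 2 * r) :
    (1 - √(2 * r)) ^ n * ‖P.eval z‖ ≤ M := by
  obtain ⟨w, hw0, hw, h⟩ := exists_jouk z
  have hl := jouk_lower z w r hr hw0 hw h hz
  let g : ℂ → ℂ := fun v => ∑ k ∈ Finset.range (n + 1), P.coeff k * v ^ (n - k) * ((v ^ 2 + 1) / 2) ^ k
  have hg : ∀ v y : ℂ, v ^ 2 + 1 = 2 * y * v → g v = v ^ n * P.eval y := by
    intro v y hv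
    rw [Polynomial.eval_eq_sum_range' (Nat.lt_succ_of_le hd), Finset.mul_sum]
    refine Finset.sum_congr rfl fun k hk => ?_
    have hk' : k ≤ n := Nat.lt_succ_iff.mp (Finset.mem_range.mp hk)
    have : (v ^ 2 + 1) / 2 = y * v := by rw [hv]; ring
    rw [this, mul_pow]
    conv_rhs => rw [← Nat.sub_add_cancel hk', pow_add]
    ring
  have hdiff : Differentiable ℂ g := by
    intro v; dsimp only [g]; fun_prop
  have hb : ∀ v ∈ frontier (Metric.ball (0:ℂ) 1), ‖g v‖ ≤ M := by
    intro v hv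
    rw [frontier_ball _ one_ne_zero] at hv
    have hv1 : ‖v‖ = 1 := by simpa using hv
    have : v ^ 2 + 1 = 2 * ((v.re : ℝ) : ℂ) * v := by
      have h1 : v * (starRingEnd ℂ) v = 1 := by
        rw [Complex.mul_conj, Complex.normSq_eq_norm_sq, hv1]; simp
      have h2 := Complex.add_conj v
      have h3 : (2 * ((v.re : ℝ) : ℂ)) = v + (starRingEnd ℂ) v := by rw [h2]; push_cast; rfl
      rw [h3]; linear_combination -h1
    rw [hg v _ this, norm_mul, norm_pow, hv1, one_pow, one_mul]
    apply hM
    have := Complex.abs_re_le_norm v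
    rw [hv1] at this
    exact abs_le.mp this
  have hmax := Complex.norm_le_of_forall_mem_frontier_norm_le Metric.isBounded_ball
    hdiff.diffContOnCl hb (z := w) (by
      rw [closure_ball _ one_ne_zero]; simpa using hw)
  rw [hg w z h, norm_mul, norm_pow] at hmax
  refine le_trans ?_ hmax
  have : 0 ≤ 1 - √(2 * r) := by linarith
  gcongr

lemma lint_half (δ : ℝ) (hδ : 0 < δ) :
    ∫⁻ y in Icc (0:ℝ) δ, ENNReal.ofReal (|y| ^ (-(1/2) : ℝ)) = ENNReal.ofReal (2 * √δ) := by
  have hI : IntervalIntegrable (fun y : ℝ => y ^ (-(1/2) : ℝ)) volume 0 δ :=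
    intervalIntegral.intervalIntegrable_rpow' (by norm_num)
  have hv : ∫ y in (0:ℝ)..δ, y ^ (-(1/2) : ℝ) = 2 * √δ := by
    rw [integral_rpow (Or.inl (by norm_num)), Real.sqrt_eq_rpow]
    norm_num
    ring
  rw [setLIntegral_congr Ioc_ae_eq_Icc.symm, ← hv, intervalIntegral.integral_of_le hδ.le,
    ofReal_integral_eq_lintegral_ofReal]
  · refine setLIntegral_congr_fun measurableSet_Ioc fun y hy => ?_
    simp only [abs_of_pos hy.1]
  · exact (intervalIntegrable_iff_integrableOn_Ioc_of_le hδ.le).mp hI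
  · filter_upwards [ae_restrict_mem measurableSet_Ioc] with y hy
    exact Real.rpow_nonneg hy.1.le _

lemma lint_sym (δ : ℝ) (hδ : 0 < δ) :
    ∫⁻ y in Icc (-δ:ℝ) δ, ENNReal.ofReal (|y| ^ (-(1/2) : ℝ)) ≤ ENNReal.ofReal (4 * √δ) := by
  have h2 : ∫⁻ y in Icc (-δ:ℝ) 0, ENNReal.ofReal (|y| ^ (-(1/2) : ℝ)) = ENNReal.ofReal (2 * √δ) := by
    rw [← lint_half δ hδ]
    have := (Measure.measurePreserving_neg (volume : Measure ℝ)).setLIntegral_comp_preimage_emb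
      (Homeomorph.neg ℝ).measurableEmbedding
      (fun y => ENNReal.ofReal (|y| ^ (-(1/2) : ℝ))) (Icc 0 δ)
    rw [← this]
    simp
  have : Icc (-δ) δ = Icc (-δ) 0 ∪ Icc 0 δ := by
    rw [Icc_union_Icc_eq_Icc] <;> linarith
  rw [this]
  refine (lintegral_union_le _ _ _).trans ?_
  rw [h2, lint_half δ hδ, ← ENNReal.ofReal_add (by positivity) (by positivity)]
  apply ENNReal.ofReal_le_ofReal; linarith

lemma lint_shift (x₀ t δ : ℝ) (hδ : 0 < δ) :
    ∫⁻ x in Icc (x₀ - δ) (x₀ + δ), ENNReal.ofReal (|x - t| ^ (-(1/2) : ℝ))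
      ≤ ENNReal.ofReal (6 * √δ) := by
  have hpt : ∀ x, ENNReal.ofReal (|x - t| ^ (-(1/2) : ℝ)) ≤
      (Icc (-δ) δ).indicator (fun y => ENNReal.ofReal (|y| ^ (-(1/2) : ℝ))) (x - t)
        + ENNReal.ofReal (δ ^ (-(1/2) : ℝ)) := by
    intro x
    by_cases hx : x - t ∈ Icc (-δ) δ
    · rw [indicator_of_mem hx]; exact le_self_add
    · rw [indicator_of_notMem hx, zero_add]
      apply ENNReal.ofReal_le_ofReal
      apply Real.rpow_le_rpow_of_nonpos hδ _ (by norm_num)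
      by_contra hc
      exact hx (abs_le.mp (not_le.mp hc).le)
  refine (lintegral_mono hpt).trans ?_
  rw [lintegral_add_right _ measurable_const]
  have h1 : ∫⁻ x in Icc (x₀ - δ) (x₀ + δ), (Icc (-δ) δ).indicator (fun y => ENNReal.ofReal (|y| ^ (-(1/2) : ℝ))) (x - t) ≤ ENNReal.ofReal (4 * √δ) := by
    refine (setLIntegral_le_lintegral _ _).trans ?_
    rw [lintegral_sub_right_eq_self (fun y => (Icc (-δ) δ).indicator (fun y => ENNReal.ofReal (|y| ^ (-(1/2) : ℝ))) y) t,
      lintegral_indicator measurableSet_Icc]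
    exact lint_sym δ hδ
  have h2 : ∫⁻ x in Icc (x₀ - δ) (x₀ + δ), ENNReal.ofReal (δ ^ (-(1/2) : ℝ)) = ENNReal.ofReal (2 * √δ) := by
    rw [setLIntegral_const, Real.volume_Icc, ← ENNReal.ofReal_mul (by positivity)]
    congr 1
    rw [Real.rpow_neg hδ.le, ← Real.sqrt_eq_rpow]
    have := Real.sqrt_pos.mpr hδ
    field_simp
    nlinarith [Real.sq_sqrt hδ.le]
  rw [h2]
  refine (add_le_add_left h1 _).trans ?_
  rw [← ENNReal.ofReal_add (by positivity) (by positivity)]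
  apply ENNReal.ofReal_le_ofReal; linarith

lemma sublevel {ι : Type*} (S : Finset ι) (t : ι → ℝ) (x₀ δ h : ℝ) (hδ : 0 < δ) (hh : 0 < h) :
    volume {x | x ∈ Icc (x₀ - δ) (x₀ + δ) ∧ ∏ i ∈ S, |x - t i| < h ^ S.card}
      ≤ ENNReal.ofReal (6 * √(h * δ)) := by
  classical
  rcases S.eq_empty_or_nonempty with rfl | hS
  · simp
  have hN : 0 < S.card := hS.card_pos
  let F : ℝ → ENNReal := fun x => ∑ i ∈ S, ENNReal.ofReal (√h * |x - t i| ^ (-(1/2) : ℝ))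
  have hFm : Measurable F := by
    dsimp only [F]; fun_prop
  have hsub : {x | x ∈ Icc (x₀ - δ) (x₀ + δ) ∧ ∏ i ∈ S, |x - t i| < h ^ S.card} ⊆
      ({x | (S.card : ENNReal) ≤ F x} ∩ Icc (x₀ - δ) (x₀ + δ)) ∪ (S.image t : Set ℝ) := by
    rintro x ⟨hx, hp⟩
    by_cases hxt : x ∈ (S.image t : Set ℝ)
    · exact Or.inr hxt
    refine Or.inl ⟨?_, hx⟩
    have hne : ∀ i ∈ S, 0 < |x - t i| := by
      intro i hi
      rw [abs_pos, sub_ne_zero]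
      rintro rfl
      exact hxt (by simpa using ⟨i, hi, rfl⟩)
    have hsum : (S.card : ℝ) ≤ ∑ i ∈ S, √h * |x - t i| ^ (-(1/2) : ℝ) := by
      have h1 : ∀ i ∈ S, 1 + (1/2) * (Real.log h - Real.log |x - t i|) ≤ √h * |x - t i| ^ (-(1/2) : ℝ) := by
        intro i hi
        have hu : 0 < √h * |x - t i| ^ (-(1/2) : ℝ) := mul_pos (Real.sqrt_pos.mpr hh) (Real.rpow_pos_of_pos (hne i hi) _)
        have := Real.log_le_sub_one_of_pos hu
        rw [Real.log_mul (Real.sqrt_pos.mpr hh).ne' (Real.rpow_pos_of_pos (hne i hi) _).ne',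
          Real.log_sqrt hh.le, Real.log_rpow (hne i hi)] at this
        linarith
      refine le_trans ?_ (Finset.sum_le_sum h1)
      rw [Finset.sum_add_distrib, ← Finset.mul_sum, Finset.sum_sub_distrib,
        ← Real.log_prod (fun i hi => (hne i hi).ne')]
      have := Real.log_le_log (Finset.prod_pos hne) hp.le
      rw [Real.log_pow] at this
      simp
      linarith
    show (S.card : ENNReal) ≤ F x
    dsimp only [F]
    rw [← ENNReal.ofReal_sum_of_nonneg (fun i _ => by positivity), ← ENNReal.ofReal_natCast]
    exact ENNReal.ofReal_le_ofReal hsum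
  refine (measure_mono hsub).trans ((measure_union_le _ _).trans ?_)
  rw [(S.image t).finite_toSet.measure_zero, add_zero]
  have hc := mul_meas_ge_le_lintegral (μ := volume.restrict (Icc (x₀ - δ) (x₀ + δ))) hFm (S.card : ENNReal)
  rw [Measure.restrict_apply (measurableSet_le measurable_const hFm)] at hc
  have hint : ∫⁻ x in Icc (x₀ - δ) (x₀ + δ), F x ≤ S.card * ENNReal.ofReal (6 * √(h * δ)) := by
    dsimp only [F]
    rw [lintegral_finsetSum _ (fun i _ => by fun_prop), ← nsmul_eq_mul]
    apply Finset.sum_le_card_nsmul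
    intro i _
    simp_rw [ENNReal.ofReal_mul (Real.sqrt_nonneg h)]
    rw [lintegral_const_mul' _ _ ENNReal.ofReal_ne_top]
    refine (mul_le_mul_right (lint_shift x₀ (t i) δ hδ) _).trans ?_
    rw [← ENNReal.ofReal_mul (Real.sqrt_nonneg h), Real.sqrt_mul hh.le]
    apply ENNReal.ofReal_le_ofReal; linarith
  exact (ENNReal.mul_le_mul_iff_right (by exact_mod_cast hN.ne') (ENNReal.natCast_ne_top _)).mp (hc.trans hint)

lemma exists_roots (P : Polynomial ℂ) : ∃ (d : ℕ) (a : ℂ) (z : Fin d → ℂ), d ≤ P.natDegree ∧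
    ∀ y, P.eval y = a * ∏ i, (y - z i) := by
  refine ⟨P.roots.toList.length, P.leadingCoeff, fun i => P.roots.toList.get i, ?_, fun y => ?_⟩
  · simpa using P.card_roots'
  · have h := (IsAlgClosed.splits P).eq_prod_roots
    conv_lhs => rw [h]
    rw [Polynomial.eval_mul, Polynomial.eval_C, Polynomial.eval_multiset_prod]
    congr 1
    rw [Multiset.map_map]
    have : P.roots = (P.roots.toList : Multiset ℂ) := by simp
    conv_lhs => rw [this]
    rw [Multiset.map_coe, Multiset.prod_coe, ← List.prod_ofFn]
    congr 1
    apply List.ext_get <;> simp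

lemma core (P : Polynomial ℂ) (n : ℕ) (hd : P.natDegree ≤ n) (M : ℝ)
    (hM : ∀ x : ℝ, x ∈ Icc (-1:ℝ) 1 → ‖P.eval (x : ℂ)‖ ≤ M) (x₀ : ℝ) (hx₀ : x₀ ∈ Icc (-1:ℝ) 1)
    (δ R r : ℝ) (hδ : 0 < δ) (hR : 1 < R) (hr : 0 < r) (hr1 : √(2 * r) < 1)
    (hRr : 2 * R * δ ≤ r) :
    ∃ N : ℕ, ‖P.eval (x₀ : ℂ)‖ * (1 - √(2 * r)) ^ n ≤ (2 * R * δ / r) ^ N * M ∧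
      ∀ h, 0 < h → volume {x : ℝ | x ∈ Icc (x₀ - δ) (x₀ + δ) ∧
        ‖P.eval (x : ℂ)‖ < ‖P.eval (x₀ : ℂ)‖ * (1 - 1 / R) ^ n * (h / (R * δ)) ^ N}
          ≤ ENNReal.ofReal (6 * √(h * δ)) := by
  classical
  obtain ⟨d, a, z, hdn, hP⟩ := exists_roots P
  let S : Finset (Fin d) := Finset.univ.filter fun i => ‖(x₀ : ℂ) - z i‖ < R * δ
  let S' : Finset (Fin d) := Finset.univ.filter fun i => ¬ ‖(x₀ : ℂ) - z i‖ < R * δ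
  have hR0 : 0 < R := by linarith
  have hRδ : 0 < R * δ := by positivity
  have hfac : ∀ y, ‖P.eval y‖ = (∏ i ∈ S, ‖y - z i‖) * ‖a * ∏ i ∈ S', (y - z i)‖ := by
    intro y
    rw [hP y, ← Finset.prod_filter_mul_prod_filter_not Finset.univ (fun i => ‖(x₀ : ℂ) - z i‖ < R * δ),
      norm_mul, norm_mul, norm_mul, norm_prod]
    ring
  have hs0 : 0 < 1 - √(2 * r) := by linarith
  have hM0 : 0 ≤ M := (norm_nonneg _).trans (hM x₀ hx₀)
  refine ⟨S.card, ?_, fun h hh => ?_⟩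
  · have hmax := Complex.norm_le_of_forall_mem_frontier_norm_le
      (f := fun y => a * ∏ i ∈ S', (y - z i)) (C := M / ((1 - √(2 * r)) ^ n * (r / 2) ^ S.card))
      (Metric.isBounded_ball (x := (x₀ : ℂ)) (r := r))
      (Differentiable.diffContOnCl (by intro v; fun_prop)) (by
        intro y hy
        rw [frontier_ball _ hr.ne'] at hy
        have hy1 : ‖y - x₀‖ = r := by simpa [dist_eq_norm] using hy
        have hbw := bern_walsh P n hd M hM r hr hr1.le y (by
          have h1 : ‖y - 1‖ ≤ ‖y - x₀‖ + ‖((x₀ - 1 : ℝ) : ℂ)‖ := by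
            refine le_trans (le_of_eq ?_) (norm_add_le _ _); congr 1; push_cast; ring
          have h2 : ‖y + 1‖ ≤ ‖y - x₀‖ + ‖((x₀ + 1 : ℝ) : ℂ)‖ := by
            refine le_trans (le_of_eq ?_) (norm_add_le _ _); congr 1; push_cast; ring
          rw [Complex.norm_real, Real.norm_eq_abs] at h1 h2
          rw [abs_of_nonpos (by linarith [hx₀.2])] at h1
          rw [abs_of_nonneg (by linarith [hx₀.1])] at h2
          linarith)
        rw [le_div_iff₀ (by positivity)]
        refine le_trans ?_ hbw
        rw [hfac y]
        have : (r / 2) ^ S.card ≤ ∏ i ∈ S, ‖y - z i‖ := by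
          rw [← Finset.prod_const]
          refine Finset.prod_le_prod (fun _ _ => by positivity) fun i hi => ?_
          have h1 : ‖(x₀ : ℂ) - z i‖ < R * δ := (Finset.mem_filter.mp hi).2
          have h2 : ‖y - x₀‖ ≤ ‖y - z i‖ + ‖(x₀ : ℂ) - z i‖ := by
            refine le_trans (le_of_eq ?_) (norm_sub_le _ _); congr 1; ring
          linarith
        have h3 := mul_le_mul_of_nonneg_left this
          (mul_nonneg (norm_nonneg (a * ∏ i ∈ S', (y - z i))) (pow_nonneg hs0.le n))
        nlinarith [h3]) (z := (x₀ : ℂ)) (by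
          apply subset_closure; simpa using hr)
    rw [hfac x₀]
    have h1 : ∏ i ∈ S, ‖(x₀ : ℂ) - z i‖ ≤ (R * δ) ^ S.card := by
      rw [← Finset.prod_const]
      exact Finset.prod_le_prod (fun _ _ => norm_nonneg _) fun i hi => (Finset.mem_filter.mp hi).2.le
    calc _ ≤ (R * δ) ^ S.card * (M / ((1 - √(2 * r)) ^ n * (r / 2) ^ S.card)) * (1 - √(2 * r)) ^ n := by
          gcongr
      _ = (2 * R * δ / r) ^ S.card * M := by
          have e : 2 * R * δ / r = (R * δ) / (r / 2) := by field_simp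
          rw [e, div_pow (R * δ)]
          have := (pow_pos hs0 n).ne'
          field_simp
  · refine le_trans (measure_mono ?_) (sublevel S (fun i => (z i).re) x₀ δ h hδ hh)
    rintro x ⟨hx, hlt⟩
    refine ⟨hx, ?_⟩
    by_contra hc
    push Not at hc
    refine absurd hlt (not_lt.mpr ?_)
    have hc' : h ^ S.card ≤ ∏ i ∈ S, ‖(x : ℂ) - z i‖ := by
      refine hc.trans (Finset.prod_le_prod (fun _ _ => abs_nonneg _) fun i _ => ?_)
      simpa using Complex.abs_re_le_norm ((x : ℂ) - z i)
    have hR1 : 0 ≤ 1 - 1 / R := by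
      rw [sub_nonneg, div_le_one hR0]; exact hR.le
    have hR2 : 1 - 1 / R ≤ 1 := by
      have : 0 < 1 / R := by positivity
      linarith
    have hxx : |x - x₀| ≤ δ := by
      rw [abs_le]; constructor <;> linarith [hx.1, hx.2]
    have hfar : (1 - 1 / R) ^ n * ‖a * ∏ i ∈ S', ((x₀ : ℂ) - z i)‖ ≤ ‖a * ∏ i ∈ S', ((x : ℂ) - z i)‖ := by
      have h1 : ∏ i ∈ S', ((1 - 1 / R) * ‖(x₀ : ℂ) - z i‖) ≤ ∏ i ∈ S', ‖(x : ℂ) - z i‖ := by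
        refine Finset.prod_le_prod (fun _ _ => by positivity) fun i hi => ?_
        have h1 : R * δ ≤ ‖(x₀ : ℂ) - z i‖ := not_lt.mp (Finset.mem_filter.mp hi).2
        have h2 : ‖(x₀ : ℂ) - z i‖ ≤ ‖(x : ℂ) - z i‖ + ‖((x - x₀ : ℝ) : ℂ)‖ := by
          refine le_trans (le_of_eq ?_) (norm_sub_le _ _); congr 1; push_cast; ring
        rw [Complex.norm_real, Real.norm_eq_abs] at h2
        have h3 : δ ≤ 1 / R * ‖(x₀ : ℂ) - z i‖ := by
          rw [one_div, inv_mul_eq_div, le_div_iff₀ hR0]; linarith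
        linarith
      rw [Finset.prod_mul_distrib, Finset.prod_const] at h1
      have hcard : S'.card ≤ n := by
        refine le_trans (Finset.card_le_univ _) ?_
        simpa using hdn.trans hd
      have h4 : (1 - 1 / R) ^ n ≤ (1 - 1 / R) ^ S'.card := pow_le_pow_of_le_one hR1 hR2 hcard
      rw [norm_mul, norm_mul, norm_prod, norm_prod]
      calc _ = ‖a‖ * ((1 - 1 / R) ^ n * ∏ i ∈ S', ‖(x₀ : ℂ) - z i‖) := by ring
        _ ≤ ‖a‖ * ((1 - 1 / R) ^ S'.card * ∏ i ∈ S', ‖(x₀ : ℂ) - z i‖) := by gcongr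
        _ ≤ _ := by gcongr
    rw [hfac x₀, hfac x]
    have h1 : ∏ i ∈ S, ‖(x₀ : ℂ) - z i‖ ≤ (R * δ) ^ S.card := by
      rw [← Finset.prod_const]
      exact Finset.prod_le_prod (fun _ _ => norm_nonneg _) fun i hi => (Finset.mem_filter.mp hi).2.le
    calc _ = (∏ i ∈ S, ‖(x₀ : ℂ) - z i‖) * (((1 - 1 / R) ^ n * ‖a * ∏ i ∈ S', ((x₀ : ℂ) - z i)‖) * (h / (R * δ)) ^ S.card) := by ring
      _ ≤ (R * δ) ^ S.card * (((1 - 1 / R) ^ n * ‖a * ∏ i ∈ S', ((x₀ : ℂ) - z i)‖) * (h / (R * δ)) ^ S.card) := by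
          gcongr
      _ = h ^ S.card * ((1 - 1 / R) ^ n * ‖a * ∏ i ∈ S', ((x₀ : ℂ) - z i)‖) := by
          rw [div_pow]; field_simp
      _ ≤ _ := by gcongr

lemma local_prop (γ : ℝ) (hγ : 0 < γ) (M : ℝ) (T : ℕ) :
    ∃ ε > 0, ∃ δ₀ > 0, ∃ n₀ : ℕ, ∀ n ≥ n₀, ∀ δ, 0 < δ → δ ≤ δ₀ → ∀ P : Polynomial ℝ,
      P.natDegree ≤ n → (∀ x ∈ Icc (-1:ℝ) 1, |P.eval x| ≤ M) → ∀ x₀ ∈ Icc (-1:ℝ) 1,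
      Real.exp (-ε * n) ≤ |P.eval x₀| →
      volume {x : ℝ | x ∈ Icc (x₀ - δ) (x₀ + δ) ∧ |P.eval x| ≤ 3 * Real.exp (-γ * n)}
        ≤ ENNReal.ofReal (δ ^ (T + 1)) := by
  obtain ⟨ε, hε⟩ : ∃ ε : ℝ, ε = γ / (12 * (2 * T + 1)) := ⟨_, rfl⟩
  have hT : (0:ℝ) ≤ T := Nat.cast_nonneg T
  have hε0 : 0 < ε := by rw [hε]; positivity
  have hε1 : 6 * ε * (2 * T + 1) = γ / 2 := by rw [hε]; field_simp; ring
  have hε2 : ε ≤ γ / 12 := by nlinarith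
  -- R
  have he1 : Real.exp (-(γ / 8)) < 1 := by rw [Real.exp_lt_one_iff]; linarith
  obtain ⟨R, hRdef⟩ : ∃ R : ℝ, R = 1 / (1 - Real.exp (-(γ / 8))) := ⟨_, rfl⟩
  have hRr : 1 - 1 / R = Real.exp (-(γ / 8)) := by rw [hRdef]; simp
  have hR : 1 < R := by
    rw [hRdef, lt_div_iff₀ (by linarith)]; linarith [Real.exp_pos (-(γ / 8))]
  have hR0 : 0 < R := by linarith
  -- r
  have he2 : Real.exp (-ε) < 1 := by rw [Real.exp_lt_one_iff]; linarith
  obtain ⟨r, hrdef⟩ : ∃ r : ℝ, r = (1 - Real.exp (-ε)) ^ 2 / 2 := ⟨_, rfl⟩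
  have hr : 0 < r := by
    have : 0 < 1 - Real.exp (-ε) := by linarith
    rw [hrdef]; positivity
  have hsq : √(2 * r) = 1 - Real.exp (-ε) := by
    rw [hrdef, mul_div_cancel₀ _ (by norm_num), Real.sqrt_sq (by linarith)]
  have hr1 : √(2 * r) < 1 := by rw [hsq]; linarith [Real.exp_pos (-ε)]
  obtain ⟨n₁, hn₁⟩ := ((Real.tendsto_exp_atTop.comp
    (tendsto_natCast_atTop_atTop.const_mul_atTop hε0)).eventually_ge_atTop M).exists_forall_of_atTop
  obtain ⟨n₂, hn₂⟩ := ((Real.tendsto_exp_atTop.comp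
    (tendsto_natCast_atTop_atTop.const_mul_atTop (show 0 < γ / 4 by positivity))).eventually_gt_atTop 3).exists_forall_of_atTop
  refine ⟨ε, hε0, min 1 (min (r / (2 * R)) (min ((r / (2 * R)) ^ 2) (1 / (36 * R)))), by positivity, max n₁ n₂, ?_⟩
  intro n hn δ hδ hδ₀ P hd hM x₀ hx₀ hκ
  have hnM : M ≤ Real.exp (ε * n) := hn₁ n (le_trans (le_max_left _ _) hn)
  have hn3 : 3 < Real.exp (γ / 4 * n) := hn₂ n (le_trans (le_max_right _ _) hn)
  simp only [le_min_iff] at hδ₀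
  obtain ⟨d1, d2, d3, d4⟩ := hδ₀
  have hev : ∀ x : ℝ, ‖(P.map (algebraMap ℝ ℂ)).eval (x : ℂ)‖ = |P.eval x| := by
    intro x
    have : (P.map (algebraMap ℝ ℂ)).eval ((algebraMap ℝ ℂ) x) = (algebraMap ℝ ℂ) (P.eval x) :=
      Polynomial.eval_map_apply _ _
    rw [Complex.coe_algebraMap] at this
    rw [this, Complex.norm_real, Real.norm_eq_abs]
  obtain ⟨N, hN, hvol⟩ := core (P.map (algebraMap ℝ ℂ)) n ((Polynomial.natDegree_map_le).trans hd) M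
    (fun x hx => by rw [hev]; exact hM x hx) x₀ hx₀ δ R r hδ hR hr hr1 (by
      rw [le_div_iff₀ (by positivity)] at d2; linarith)
  rw [hev, hsq] at hN
  simp only [hev] at hvol
  -- bound on N
  have hsδ : 2 * R * δ / r ≤ √δ := by
    have h1 : √δ ≤ r / (2 * R) := Real.sqrt_le_iff.mpr ⟨by positivity, d3⟩
    have h2 := Real.sq_sqrt hδ.le
    have h3 := Real.sqrt_pos.mpr hδ
    rw [le_div_iff₀ (by positivity)] at h1
    rw [div_le_iff₀ hr]
    nlinarith
  have hN2 : Real.exp (-(3 * ε * n)) ≤ √δ ^ N := by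
    have h1 : Real.exp (-ε * n) * Real.exp (-ε) ^ n ≤ √δ ^ N * Real.exp (ε * n) := by
      have hκ' : Real.exp (-ε * n) * (Real.exp (-ε)) ^ n ≤ |P.eval x₀| * (1 - (1 - Real.exp (-ε))) ^ n := by
        rw [sub_sub_cancel]; gcongr
      refine hκ'.trans (hN.trans ?_)
      have hM0 : 0 ≤ M := (abs_nonneg _).trans (hM x₀ hx₀)
      gcongr
    rw [← Real.exp_nat_mul] at h1
    have h2 := mul_le_mul_of_nonneg_right h1 (Real.exp_pos (-(ε * n))).le
    rw [mul_assoc (√δ ^ N), ← Real.exp_add, ← Real.exp_add, ← Real.exp_add] at h2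
    have e1 : ε * n + -(ε * n) = 0 := by ring
    rw [e1, Real.exp_zero, mul_one] at h2
    refine le_trans (le_of_eq ?_) h2
    congr 1; ring
  have hN3 : Real.exp (-(γ / 2 * n)) ≤ (δ ^ (2 * T + 1)) ^ N := by
    have h1 := pow_le_pow_left₀ (Real.exp_pos _).le hN2 (2 * (2 * T + 1))
    have e : (√δ ^ N) ^ (2 * (2 * T + 1)) = (δ ^ (2 * T + 1)) ^ N := by
      rw [← pow_mul, ← pow_mul]
      conv_rhs => rw [← Real.sq_sqrt hδ.le]
      rw [← pow_mul]; congr 1; ring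
    rw [e, ← Real.exp_nat_mul] at h1
    refine le_trans (le_of_eq ?_) h1
    congr 1
    push_cast
    rw [← hε1]; ring
  obtain ⟨h, hh⟩ : ∃ h : ℝ, h = δ ^ (2 * T + 1) / 36 := ⟨_, rfl⟩
  have hh0 : 0 < h := by rw [hh]; positivity
  refine le_trans (measure_mono ?_) ((hvol h hh0).trans (le_of_eq ?_))
  · rintro x ⟨hx, hle⟩
    refine ⟨hx, lt_of_le_of_lt hle ?_⟩
    have hq : δ ^ (2 * T + 1) ≤ h / (R * δ) := by
      rw [le_div_iff₀ (by positivity), hh, le_div_iff₀ (by norm_num)]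
      rw [le_div_iff₀ (by positivity)] at d4
      have : 0 ≤ δ ^ (2 * T + 1) := by positivity
      nlinarith
    have hqN : Real.exp (-(γ / 2 * n)) ≤ (h / (R * δ)) ^ N :=
      hN3.trans (pow_le_pow_left₀ (by positivity) hq N)
    rw [hRr]
    calc 3 * Real.exp (-γ * n) < Real.exp (γ / 4 * n) * Real.exp (-γ * n) := by gcongr
      _ ≤ Real.exp (-ε * n) * Real.exp (-(γ / 8)) ^ n * Real.exp (-(γ / 2 * n)) := by
          rw [← Real.exp_nat_mul, ← Real.exp_add, ← Real.exp_add, ← Real.exp_add]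
          apply Real.exp_le_exp.mpr
          have hn0 : (0:ℝ) ≤ n := Nat.cast_nonneg n
          nlinarith
      _ ≤ _ := by gcongr
  · congr 1
    have : h * δ = (δ ^ (T + 1) / 6) ^ 2 := by rw [hh]; ring
    rw [this, Real.sqrt_sq (by positivity)]; ring

lemma approx_exists (f : ℝ → ℝ) (hf : ContinuousOn f (Icc (-1:ℝ) 1)) (n : ℕ) :
    ∃ P : Polynomial ℝ, P.natDegree ≤ n ∧ ∀ x ∈ Icc (-1:ℝ) 1, |f x - P.eval x| ≤ 2 * Estar f n := by
  have hlt : En f n < En f n + Real.exp (-(n:ℝ)) := by linarith [Real.exp_pos (-(n:ℝ))]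
  obtain ⟨_, ⟨P, hP, rfl⟩, h⟩ := exists_lt_of_csInf_lt
    (Set.Nonempty.image _ ⟨0, by simp⟩) hlt
  refine ⟨P, hP, fun x hx => ?_⟩
  have hb : BddAbove ((fun x => |f x - P.eval x|) '' Icc (-1:ℝ) 1) :=
    (isCompact_Icc.image_of_continuousOn ((hf.sub P.continuous.continuousOn).abs)).bddAbove
  have h1 : |f x - P.eval x| ≤ _ := le_csSup hb (mem_image_of_mem _ hx)
  have h2 : En f n ≤ Estar f n := le_max_left _ _
  have h3 : Real.exp (-(n:ℝ)) ≤ Estar f n := le_max_right _ _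
  dsimp only at h
  linarith

lemma level_local (f : ℝ → ℝ) (hf : ContinuousOn f (Icc (-1:ℝ) 1)) (γ : ℝ) (hγ : 0 < γ) (T : ℕ) :
    ∃ ε > 0, ∃ δ₀ > 0, ∃ n₀ : ℕ, ∀ n ≥ n₀, Estar f n ≤ Real.exp (-γ * n) → ∀ δ, 0 < δ → δ ≤ δ₀ →
      ∀ x₀ ∈ Icc (-1:ℝ) 1, Real.exp (-ε * n) ≤ |f x₀| →
      volume ({x : ℝ | x ∈ Icc (-1:ℝ) 1 ∧ |f x| ≤ Estar f n} ∩ Icc (x₀ - δ) (x₀ + δ))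
        ≤ ENNReal.ofReal (δ ^ (T + 1)) := by
  obtain ⟨M₀, hM₀⟩ := isCompact_Icc.exists_bound_of_continuousOn hf
  obtain ⟨ε', hε', δ₀, hδ₀, n₁, H⟩ := local_prop γ hγ (M₀ + 2) T
  obtain ⟨ε, hε⟩ : ∃ ε : ℝ, ε = min ε' γ / 2 := ⟨_, rfl⟩
  have hε0 : 0 < ε := by rw [hε]; positivity
  have hε1 : 2 * ε ≤ ε' := by rw [hε]; linarith [min_le_left ε' γ]
  have hε2 : 2 * ε ≤ γ := by rw [hε]; linarith [min_le_right ε' γ]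
  obtain ⟨n₂, hn₂⟩ := ((Real.tendsto_exp_atTop.comp
    (tendsto_natCast_atTop_atTop.const_mul_atTop hε0)).eventually_ge_atTop 3).exists_forall_of_atTop
  refine ⟨ε, hε0, δ₀, hδ₀, max n₁ n₂, ?_⟩
  intro n hn hE δ hδ hδ1 x₀ hx₀ hκ
  have hn3 : 3 ≤ Real.exp (ε * n) := hn₂ n (le_trans (le_max_right _ _) hn)
  have hn0 : (0:ℝ) ≤ n := Nat.cast_nonneg n
  obtain ⟨P, hPd, hP⟩ := approx_exists f hf n
  have hE1 : Estar f n ≤ 1 := hE.trans (by rw [Real.exp_le_one_iff]; nlinarith)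
  refine le_trans (measure_mono ?_) (H n (le_trans (le_max_left _ _) hn) δ hδ hδ1 P hPd ?_ x₀ hx₀ ?_)
  · rintro x ⟨⟨hx, hxE⟩, hx2⟩
    refine ⟨hx2, ?_⟩
    have h1 := hP x hx
    have h2 := abs_sub_abs_le_abs_sub (P.eval x) (f x)
    rw [abs_sub_comm] at h2
    linarith
  · intro x hx
    have h1 := hP x hx
    have h2 := abs_sub_abs_le_abs_sub (P.eval x) (f x)
    have h3 := hM₀ x hx
    rw [Real.norm_eq_abs] at h3
    rw [abs_sub_comm] at h2
    linarith
  · have h1 := hP x₀ hx₀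
    have h2 := abs_sub_abs_le_abs_sub (f x₀) (P.eval x₀)
    have e1 : Real.exp (-ε' * n) ≤ Real.exp (-(2 * ε) * n) := Real.exp_le_exp.mpr (by nlinarith)
    have e2 : Real.exp (-γ * n) ≤ Real.exp (-(2 * ε) * n) := Real.exp_le_exp.mpr (by nlinarith)
    have e3 : 3 * Real.exp (-(2 * ε) * n) ≤ Real.exp (-ε * n) := by
      have : Real.exp (-ε * n) = Real.exp (ε * n) * Real.exp (-(2 * ε) * n) := by
        rw [← Real.exp_add]; congr 1; ring
      rw [this]; gcongr
    linarith

lemma level_fin (f : ℝ → ℝ) (t : ℝ) : volume {x : ℝ | x ∈ Icc (-1:ℝ) 1 ∧ |f x| ≤ t} ≠ ⊤ :=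
  ((measure_mono (fun _ hx => hx.1)).trans_lt
    (measure_Icc_lt_top (a := (-1:ℝ)) (b := 1))).ne

lemma level_global (f : ℝ → ℝ) (hf : ContinuousOn f (Icc (-1:ℝ) 1)) (γ : ℝ) (hγ : 0 < γ) (T : ℕ) :
    ∃ ε > 0, ∃ ρ₀ > 0, ∃ n₀ : ℕ, ∀ n ≥ n₀, Estar f n ≤ Real.exp (-γ * n) → ∀ ρ, 0 < ρ → ρ ≤ ρ₀ →
      (∀ i ∈ Finset.range (⌊2 / ρ⌋₊ + 1), ∃ x ∈ Icc (-1:ℝ) 1, |x - (-1 + i * ρ)| ≤ ρ ∧ Real.exp (-ε * n) ≤ |f x|) →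
      mf f (Estar f n) ≤ 8 * (2 * ρ) ^ T := by
  obtain ⟨ε, hε, δ₀, hδ₀, n₀, H⟩ := level_local f hf γ hγ T
  refine ⟨ε, hε, min (δ₀ / 2) 1, by positivity, n₀, ?_⟩
  intro n hn hE ρ hρ hρ0 hx
  have hρ1 : ρ ≤ 1 := hρ0.trans (min_le_right _ _)
  have hρ2 : 2 * ρ ≤ δ₀ := by linarith [hρ0.trans (min_le_left _ _)]
  choose! x hxI hxd hxf using hx
  have hsub : {y : ℝ | y ∈ Icc (-1:ℝ) 1 ∧ |f y| ≤ Estar f n} ⊆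
      ⋃ i ∈ Finset.range (⌊2 / ρ⌋₊ + 1), ({y : ℝ | y ∈ Icc (-1:ℝ) 1 ∧ |f y| ≤ Estar f n} ∩
        Icc (x i - 2 * ρ) (x i + 2 * ρ)) := by
    intro y hy
    have hy0 : 0 ≤ (y + 1) / ρ := div_nonneg (by linarith [hy.1.1]) hρ.le
    have hi : ⌊(y + 1) / ρ⌋₊ ∈ Finset.range (⌊2 / ρ⌋₊ + 1) := by
      rw [Finset.mem_range, Nat.lt_succ_iff]
      apply Nat.floor_le_floor
      gcongr
      linarith [hy.1.2]
    simp only [mem_iUnion]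
    refine ⟨_, hi, hy, ?_⟩
    have h1 := Nat.floor_le hy0
    have h2 := Nat.lt_floor_add_one ((y + 1) / ρ)
    rw [le_div_iff₀ hρ] at h1
    rw [div_lt_iff₀ hρ] at h2
    have h3 := abs_le.mp (hxd _ hi)
    constructor <;> linarith [h3.1, h3.2]
  have hle : volume {y : ℝ | y ∈ Icc (-1:ℝ) 1 ∧ |f y| ≤ Estar f n} ≤
      ENNReal.ofReal (8 * (2 * ρ) ^ T) := by
    refine (measure_mono hsub).trans ((measure_biUnion_finset_le _ _).trans ?_)
    refine (Finset.sum_le_card_nsmul _ _ _ fun i hi =>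
      H n hn hE (2 * ρ) (by positivity) hρ2 (x i) (hxI i hi) (hxf i hi)).trans ?_
    rw [Finset.card_range, nsmul_eq_mul, ← ENNReal.ofReal_natCast, ← ENNReal.ofReal_mul (by positivity)]
    apply ENNReal.ofReal_le_ofReal
    have hfl : (⌊2 / ρ⌋₊ : ℝ) ≤ 2 / ρ := Nat.floor_le (by positivity)
    have h1 : 1 ≤ 1 / ρ := by rw [le_div_iff₀ hρ]; linarith
    push_cast
    calc ((⌊2 / ρ⌋₊ : ℝ) + 1) * (2 * ρ) ^ (T + 1) ≤ (2 / ρ + 2 * (1 / ρ)) * (2 * ρ) ^ (T + 1) := by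
          gcongr; linarith
      _ = 8 * (2 * ρ) ^ T := by rw [pow_succ]; field_simp; ring
  exact ENNReal.toReal_le_of_le_ofReal (by positivity) hle

lemma vol_near (y ρ : ℝ) (hy : y ∈ Icc (-1:ℝ) 1) (hρ : 0 < ρ) (hρ1 : ρ ≤ 1) :
    ENNReal.ofReal ρ ≤ volume (Icc (-1:ℝ) 1 ∩ Icc (y - ρ) (y + ρ)) := by
  rcases le_total y 0 with h | h
  · calc ENNReal.ofReal ρ = volume (Icc y (y + ρ)) := by rw [Real.volume_Icc]; congr 1; ring
      _ ≤ _ := measure_mono (by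
        rintro x ⟨h1, h2⟩
        exact ⟨⟨by linarith [hy.1], by linarith⟩, ⟨by linarith, by linarith⟩⟩)
  · calc ENNReal.ofReal ρ = volume (Icc (y - ρ) y) := by rw [Real.volume_Icc]; congr 1; ring
      _ ≤ _ := measure_mono (by
        rintro x ⟨h1, h2⟩
        exact ⟨⟨by linarith, by linarith [hy.2]⟩, ⟨by linarith, by linarith⟩⟩)

lemma exp_ev (ε : ℝ) (hε : 0 < ε) (n : ℕ → ℕ) (hmono : StrictMono n) (c : ℝ) (hc : 0 < c) :
    ∀ᶠ j in atTop, Real.exp (-ε * n j) ≤ c := by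
  have h1 : Tendsto (fun j => ε * (n j : ℝ)) atTop atTop :=
    (tendsto_natCast_atTop_atTop.comp hmono.tendsto_atTop).const_mul_atTop hε
  have h2 := Real.tendsto_exp_neg_atTop_nhds_zero.comp h1
  filter_upwards [h2.eventually (ge_mem_nhds hc)] with j hj
  simpa [neg_mul] using hj

lemma dense_ne (f : ℝ → ℝ) (hf : ContinuousOn f (Icc (-1:ℝ) 1)) (γ : ℝ) (hγ : 0 < γ)
    (hf0 : ∃ x ∈ Icc (-1:ℝ) 1, f x ≠ 0) (n : ℕ → ℕ) (hmono : StrictMono n)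
    (hE : ∀ j, Estar f (n j) ≤ Real.exp (-γ * n j)) (ρ : ℝ) (hρ : 0 < ρ) :
    ∀ y ∈ Icc (-1:ℝ) 1, ∃ x ∈ Icc (-1:ℝ) 1, |x - y| ≤ ρ ∧ f x ≠ 0 := by
  obtain ⟨x₀, hx₀, hfx₀⟩ := hf0
  obtain ⟨ε, hε, δ₀, hδ₀, n₀, H⟩ := level_local f hf γ hγ 1
  obtain ⟨s, hs⟩ : ∃ s : ℝ, s = min ρ (min (δ₀ / 3) (1 / 10)) := ⟨_, rfl⟩
  have hs0 : 0 < s := by rw [hs]; positivity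
  have hs1 : s ≤ ρ := by rw [hs]; exact min_le_left _ _
  have hs2 : 3 * s ≤ δ₀ := by
    have : s ≤ δ₀ / 3 := by rw [hs]; exact (min_le_right _ _).trans (min_le_left _ _)
    linarith
  have hs3 : s ≤ 1 / 10 := by rw [hs]; exact (min_le_right _ _).trans (min_le_right _ _)
  have key : ∀ k : ℕ, ∀ y ∈ Icc (-1:ℝ) 1, |y - x₀| ≤ k * s →
      ∃ x ∈ Icc (-1:ℝ) 1, |x - y| ≤ s ∧ f x ≠ 0 := by
    intro k
    induction k with
    | zero =>
      intro y hy hyx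
      refine ⟨x₀, hx₀, ?_, hfx₀⟩
      rw [abs_sub_comm]; simp at hyx
      rw [hyx]; simpa using hs0.le
    | succ k ih =>
      intro y hy hyx
      have hk : (0:ℝ) < k + 1 := by positivity
      push_cast at hyx
      obtain ⟨c, hc⟩ : ∃ c : ℝ, c = k / (k + 1 : ℝ) := ⟨_, rfl⟩
      have hc0 : 0 ≤ c := by rw [hc]; positivity
      have hc1 : c * (k + 1) = k := by rw [hc]; field_simp
      have hc2 : c ≤ 1 := by nlinarith
      obtain ⟨x', hx', hx'y, hfx'⟩ := ih (x₀ + c * (y - x₀)) (by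
          constructor <;> nlinarith [hx₀.1, hx₀.2, hy.1, hy.2]) (by
          rw [add_sub_cancel_left, abs_mul, abs_of_nonneg hc0]
          nlinarith)
      have hy' : |x₀ + c * (y - x₀) - y| ≤ s := by
        have : x₀ + c * (y - x₀) - y = -((1 - c) * (y - x₀)) := by ring
        rw [this, abs_neg, abs_mul, abs_of_nonneg (by linarith)]
        nlinarith
      by_contra hcon
      push Not at hcon
      obtain ⟨j, hj1, hj2⟩ := ((exp_ev ε hε n hmono |f x'| (abs_pos.mpr hfx')).and
        (hmono.tendsto_atTop.eventually_ge_atTop n₀)).exists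
      have h1 := H (n j) hj2 (hE j) (3 * s) (by positivity) hs2 x' hx' hj1
      have h2 := vol_near y s hy hs0 (by linarith)
      have h3 : ENNReal.ofReal s ≤ ENNReal.ofReal ((3 * s) ^ (1 + 1)) := by
        refine h2.trans (le_trans (measure_mono ?_) h1)
        rintro x ⟨hx, hxy⟩
        have hfx : f x = 0 := hcon x hx (by rw [abs_le]; constructor <;> linarith [hxy.1, hxy.2])
        refine ⟨⟨hx, ?_⟩, ?_⟩
        · rw [hfx, abs_zero]
          exact (Real.exp_pos _).le.trans (le_max_right _ _)
        · have a1 := abs_le.mp hy'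
          have a2 := abs_le.mp hx'y
          constructor <;> linarith [hxy.1, hxy.2, a1.1, a1.2, a2.1, a2.2]
      rw [ENNReal.ofReal_le_ofReal_iff (by positivity)] at h3
      have h4 : (3 * s) ^ (1 + 1) = 9 * s * s := by ring
      rw [h4] at h3
      nlinarith
  intro y hy
  obtain ⟨k, hk⟩ := exists_nat_ge (|y - x₀| / s)
  rw [div_le_iff₀ hs0] at hk
  obtain ⟨x, hx, hxy, hfx⟩ := key k y hy hk
  exact ⟨x, hx, hxy.trans hs1, hfx⟩

lemma grid_mem (ρ : ℝ) (hρ : 0 < ρ) (i : ℕ) (hi : i ∈ Finset.range (⌊2 / ρ⌋₊ + 1)) :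
    -1 + (i:ℝ) * ρ ∈ Icc (-1:ℝ) 1 := by
  have h1 : i ≤ ⌊2 / ρ⌋₊ := Nat.lt_succ_iff.mp (Finset.mem_range.mp hi)
  have h2 : (i:ℝ) ≤ 2 / ρ := (Nat.le_floor_iff (by positivity)).mp h1
  rw [le_div_iff₀ hρ] at h2
  have : 0 ≤ (i:ℝ) * ρ := by positivity
  constructor <;> linarith

lemma mf_tendsto (f : ℝ → ℝ) (hf : ContinuousOn f (Icc (-1:ℝ) 1)) (γ : ℝ) (hγ : 0 < γ)
    (hf0 : ∃ x ∈ Icc (-1:ℝ) 1, f x ≠ 0) (n : ℕ → ℕ) (hmono : StrictMono n)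
    (hE : ∀ j, Estar f (n j) ≤ Real.exp (-γ * n j)) (η : ℝ) (hη : 0 < η) :
    ∀ᶠ j in atTop, mf f (Estar f (n j)) ≤ η := by
  obtain ⟨ε, hε, ρ₀, hρ₀, n₀, H⟩ := level_global f hf γ hγ 1
  obtain ⟨ρ, hρ⟩ : ∃ ρ : ℝ, ρ = min ρ₀ (η / 16) := ⟨_, rfl⟩
  have hρ0 : 0 < ρ := by rw [hρ]; positivity
  have hρ1 : ρ ≤ ρ₀ := by rw [hρ]; exact min_le_left _ _
  have hρ2 : ρ ≤ η / 16 := by rw [hρ]; exact min_le_right _ _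
  have hd := dense_ne f hf γ hγ hf0 n hmono hE ρ hρ0
  have hall : ∀ᶠ j in atTop, ∀ i ∈ Finset.range (⌊2 / ρ⌋₊ + 1),
      ∃ x ∈ Icc (-1:ℝ) 1, |x - (-1 + i * ρ)| ≤ ρ ∧ Real.exp (-ε * n j) ≤ |f x| := by
    rw [Filter.eventually_all_finset]
    intro i hi
    obtain ⟨x, hx, hxy, hfx⟩ := hd _ (grid_mem ρ hρ0 i hi)
    filter_upwards [exp_ev ε hε n hmono |f x| (abs_pos.mpr hfx)] with j hj
    exact ⟨x, hx, hxy, hj⟩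
  filter_upwards [hall, hmono.tendsto_atTop.eventually_ge_atTop n₀] with j hj1 hj2
  refine (H (n j) hj2 (hE j) ρ hρ0 hρ1 hj1).trans ?_
  linarith

lemma step_ineq (f : ℝ → ℝ) (hf : ContinuousOn f (Icc (-1:ℝ) 1)) (γ : ℝ) (hγ : 0 < γ)
    (hf0 : ∃ x ∈ Icc (-1:ℝ) 1, f x ≠ 0) (n : ℕ → ℕ) (hmono : StrictMono n) (hpos : ∀ j, 0 < n j)
    (hlac : Tendsto (fun j => (n (j+1) : ℝ) / (n j : ℝ)) atTop atTop)
    (hE : ∀ j, Estar f (n j) ≤ Real.exp (-γ * n j))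
    (hm : ∀ j, 0 < mf f (Estar f (n j))) (T : ℕ) :
    ∀ᶠ j in atTop, mf f (Estar f (n (j + 1))) ≤ 8 * (4 * mf f (Estar f (n j))) ^ T := by
  obtain ⟨ε, hε, ρ₀, hρ₀, n₀, H⟩ := level_global f hf γ hγ T
  filter_upwards [mf_tendsto f hf γ hγ hf0 n hmono hE (min (ρ₀ / 2) (1 / 2)) (by positivity),
    hlac.eventually_ge_atTop (1 / ε),
    (hmono.tendsto_atTop.comp (tendsto_add_atTop_nat 1)).eventually_ge_atTop n₀] with j h1 h2 h3
  obtain ⟨m, hmdef⟩ : ∃ m, m = mf f (Estar f (n j)) := ⟨_, rfl⟩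
  have hm0 := hm j
  rw [← hmdef] at h1 hm0 ⊢
  have hm1 : 2 * m ≤ ρ₀ := by linarith [h1.trans (min_le_left _ _)]
  have hm2 : 2 * m ≤ 1 := by linarith [h1.trans (min_le_right _ _)]
  have := H (n (j + 1)) h3 (hE _) (2 * m) (by positivity) hm1 (by
    intro i hi
    have hy := grid_mem (2 * m) (by positivity) i hi
    by_contra hcon
    push Not at hcon
    have hv := vol_near _ (2 * m) hy (by positivity) hm2
    have hle : ENNReal.ofReal (2 * m) ≤ ENNReal.ofReal m := by
      refine hv.trans ?_
      have hmm : ENNReal.ofReal m = volume {x : ℝ | x ∈ Icc (-1:ℝ) 1 ∧ |f x| ≤ Estar f (n j)} := by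
        rw [hmdef, mf, ENNReal.ofReal_toReal (level_fin f _)]
      rw [hmm]
      refine measure_mono ?_
      rintro x ⟨hx, hxy⟩
      refine ⟨hx, ?_⟩
      have h4 := hcon x hx (by rw [abs_le]; constructor <;> linarith [hxy.1, hxy.2])
      refine h4.le.trans (le_trans ?_ (le_max_right _ _))
      apply Real.exp_le_exp.mpr
      have hnj : (0:ℝ) < n j := by exact_mod_cast hpos j
      rw [le_div_iff₀ hnj, one_div, inv_mul_eq_div, div_le_iff₀ hε] at h2
      linarith
    rw [ENNReal.ofReal_le_ofReal_iff hm0.le] at hle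
    linarith)
  refine this.trans (le_of_eq ?_)
  ring

lemma tendsto_div_of_step (a : ℕ → ℝ) (h : ∀ C : ℝ, ∀ᶠ j in atTop, a j + C ≤ a (j + 1)) :
    Tendsto (fun j => a j / (j : ℝ)) atTop atTop := by
  rw [tendsto_atTop]
  intro C
  obtain ⟨D, hD⟩ : ∃ D : ℝ, D = |C| + 1 := ⟨_, rfl⟩
  have hD0 : 0 < D := by rw [hD]; positivity
  have hCD : C ≤ D := by rw [hD]; linarith [le_abs_self C]
  obtain ⟨J, hJ⟩ := (h (2 * D)).exists_forall_of_atTop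
  have hind : ∀ k : ℕ, a J + k * (2 * D) ≤ a (J + k) := by
    intro k
    induction k with
    | zero => simp
    | succ k ih =>
      have := hJ (J + k) (by omega)
      rw [← add_assoc]; push_cast; linarith
  obtain ⟨K, hK⟩ := exists_nat_ge ((2 * D * J - a J) / D)
  rw [div_le_iff₀ hD0] at hK
  filter_upwards [eventually_ge_atTop (max (max J K) 1)] with j hj
  have hj1 : J ≤ j := le_trans (le_trans (le_max_left _ _) (le_max_left _ _)) hj
  have hj2 : K ≤ j := le_trans (le_trans (le_max_right _ _) (le_max_left _ _)) hj
  have hj3 : (0:ℝ) < j := by exact_mod_cast (le_trans (le_max_right _ _) hj)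
  rw [le_div_iff₀ hj3]
  have h1 := hind (j - J)
  rw [Nat.add_sub_cancel' hj1, Nat.cast_sub hj1] at h1
  have hKj : (K:ℝ) ≤ j := by exact_mod_cast hj2
  have h2 : K * D ≤ j * D := by gcongr
  have h3 : C * j ≤ D * j := by gcongr
  linarith

theorem bernstein_level_sets_corollary
    (f : ℝ → ℝ) (hf : ContinuousOn f (Set.Icc (-1:ℝ) 1))
    (hf0 : ∃ x ∈ Set.Icc (-1:ℝ) 1, f x ≠ 0)
    (β : ℝ) (hβ : 0 < β)
    (n : ℕ → ℕ) (hmono : StrictMono n) (hpos : ∀ j, 0 < n j)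
    (hlac : Tendsto (fun j => (n (j+1) : ℝ) / (n j : ℝ)) atTop atTop)
    (happrox : ∀ j, En f (n j) ≤ Real.exp (-β * (n j : ℝ)))
    (hm : ∀ j, 0 < mf f (Estar f (n j)) ∧ mf f (Estar f (n j)) < 1) :
    Tendsto (fun j => Real.log |Real.log (mf f (Estar f (n j)))| / (j : ℝ))
      atTop atTop := by
  obtain ⟨γ, hγ⟩ : ∃ γ : ℝ, γ = min β 1 := ⟨_, rfl⟩
  have hγ0 : 0 < γ := by rw [hγ]; positivity
  have hγ1 : γ ≤ β := by rw [hγ]; exact min_le_left _ _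
  have hγ2 : γ ≤ 1 := by rw [hγ]; exact min_le_right _ _
  have hE : ∀ j, Estar f (n j) ≤ Real.exp (-γ * n j) := by
    intro j
    have hn0 : (0:ℝ) ≤ n j := Nat.cast_nonneg _
    refine max_le ((happrox j).trans ?_) ?_ <;> apply Real.exp_le_exp.mpr <;> nlinarith
  apply tendsto_div_of_step
  intro C
  obtain ⟨K, hK⟩ := exists_nat_ge (Real.exp C)
  have hK0 : (0:ℝ) < K := (Real.exp_pos C).trans_le hK
  have hstep := step_ineq f hf γ hγ0 hf0 n hmono hpos hlac hE (fun j => (hm j).1) (K + 1)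
  filter_upwards [hstep, mf_tendsto f hf γ hγ0 hf0 n hmono hE
    (Real.exp (-((K + 1) * Real.log 4 + Real.log 8))) (Real.exp_pos _)] with j h1 h2
  obtain ⟨m, hmdef⟩ : ∃ m, m = mf f (Estar f (n j)) := ⟨_, rfl⟩
  obtain ⟨m', hmdef'⟩ : ∃ m, m = mf f (Estar f (n (j + 1))) := ⟨_, rfl⟩
  have hmj := hm j
  have hmj' := hm (j + 1)
  rw [← hmdef', ← hmdef] at h1 ⊢
  rw [← hmdef] at h2 hmj
  rw [← hmdef'] at hmj'
  have hl := Real.log_neg hmj.1 hmj.2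
  have hl' := Real.log_neg hmj'.1 hmj'.2
  rw [abs_of_neg hl, abs_of_neg hl']
  have h3 := Real.log_le_log hmj.1 h2
  rw [Real.log_exp] at h3
  have h4 := Real.log_le_log hmj'.1 h1
  rw [Real.log_mul (by norm_num) (by have := hmj.1; positivity), Real.log_pow,
    Real.log_mul (by norm_num) hmj.1.ne'] at h4
  push_cast at h4
  have h5 : Real.exp C * (-Real.log m) ≤ -Real.log m' := by nlinarith
  have h6 := Real.log_le_log (mul_pos (Real.exp_pos C) (by linarith)) h5
  rw [Real.log_mul (Real.exp_pos C).ne' (by linarith), Real.log_exp] at h6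
  linarith
end

section
/- Let f be a continuous real-valued function on [-1,1] that is not identically zero, let β > 0, and let (n_j) be a strictly increasing sequence of positive integers with lim_{j→∞} n_{j+1}/n_j = +∞ such that E_{n_j}(f) ≤ e^{-β n_j} for every j. Assume in addition that lim_{j→∞} |log E_{n_{j+1}}(f)| / |log E_{n_j}(f)| = +∞, and that 0 < m_f(E_{n_j}(f)) < 1 for every j. Then lim_{j→∞} |log m_f(E_{n_{j+1}}(f))| / |log m_f(E_{n_j}(f))| = +∞. -/
open Filter MeasureTheory Set

lemma bw_exists_w (z : ℂ) : ∃ w : ℂ, w ≠ 0 ∧ ‖w‖ ≤ 1 ∧ z = (w + w⁻¹) / 2 := by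
  obtain ⟨s, hs⟩ := IsAlgClosed.exists_pow_nat_eq (z ^ 2 - 1) (n := 2) (by norm_num)
  have h1 : (z + s) * (z - s) = 1 := by linear_combination -hs
  have ha : z + s ≠ 0 := left_ne_zero_of_mul_eq_one h1
  have hinv : (z + s)⁻¹ = z - s := inv_eq_of_mul_eq_one_right h1
  by_cases h : ‖z + s‖ ≤ 1
  · exact ⟨z + s, ha, h, by rw [hinv]; ring⟩
  · refine ⟨(z + s)⁻¹, inv_ne_zero ha, ?_, by rw [inv_inv, hinv]; ring⟩
    rw [norm_inv]
    exact inv_le_one_of_one_le₀ (not_le.1 h).le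

lemma bw_norm_w (w : ℂ) (hw : w ≠ 0) (u r : ℝ) (hu : u ∈ Icc (-1:ℝ) 1) 
    (hz : ‖(w + w⁻¹) / 2 - u‖ ≤ r) : ‖w‖ + ‖w‖⁻¹ ≤ 2 + 2 * r := by
  have hw' : 0 < ‖w‖ := norm_pos_iff.2 hw
  have e1 : ‖(w + w⁻¹) / 2 + 1‖ = ‖w + 1‖ ^ 2 / (2 * ‖w‖) := by
    have : (w + w⁻¹) / 2 + 1 = (w + 1) ^ 2 / (2 * w) := by field_simp; ring
    rw [this, norm_div, norm_pow, norm_mul]; simp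
  have e2 : ‖(w + w⁻¹) / 2 - 1‖ = ‖w - 1‖ ^ 2 / (2 * ‖w‖) := by
    have : (w + w⁻¹) / 2 - 1 = (w - 1) ^ 2 / (2 * w) := by field_simp; ring
    rw [this, norm_div, norm_pow, norm_mul]; simp
  have e3 := parallelogram_law_with_norm ℝ w 1
  have e4 : ‖(w + w⁻¹) / 2 + 1‖ + ‖(w + w⁻¹) / 2 - 1‖ = ‖w‖ + ‖w‖⁻¹ := by
    rw [e1, e2]; field_simp; rw [norm_one] at e3; nlinarith
  rw [← e4]
  have a1 : ‖(w + w⁻¹) / 2 + 1‖ ≤ r + (1 + u) := by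
    calc ‖(w + w⁻¹) / 2 + 1‖ = ‖((w + w⁻¹) / 2 - u) + ((1 + u : ℝ) : ℂ)‖ := by
          congr 1; push_cast; ring
      _ ≤ _ := norm_add_le _ _
      _ ≤ r + (1 + u) := by
          rw [Complex.norm_real, Real.norm_of_nonneg (by linarith [hu.1])]; gcongr
  have a2 : ‖(w + w⁻¹) / 2 - 1‖ ≤ r + (1 - u) := by
    calc ‖(w + w⁻¹) / 2 - 1‖ = ‖((w + w⁻¹) / 2 - u) - ((1 - u : ℝ) : ℂ)‖ := by
          congr 1; push_cast; ring
      _ ≤ _ := norm_sub_le _ _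
      _ ≤ r + (1 - u) := by
          rw [Complex.norm_real, Real.norm_of_nonneg (by linarith [hu.2])]; gcongr
  linarith

lemma bw_log (t r : ℝ) (ht : 0 < t) (ht1 : t ≤ 1) (h : t + t⁻¹ ≤ 2 + 2 * r) :
    t⁻¹ ≤ Real.exp (Real.sqrt (2 * r)) := by
  set l := - Real.log t with hl
  have hl0 : 0 ≤ l := by have := Real.log_nonpos ht.le ht1; linarith
  have h1 : t⁻¹ = Real.exp l := by rw [hl, Real.exp_neg, Real.exp_log ht]
  have h2 : t = Real.exp (-l) := by rw [hl, neg_neg, Real.exp_log ht]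
  rw [h1]
  apply Real.exp_le_exp.2
  apply Real.le_sqrt_of_sq_le
  have h3 : l / 2 ≤ Real.sinh (l / 2) := Real.self_le_sinh_iff.2 (by linarith)
  have h4 : Real.exp l = Real.exp (l/2) * Real.exp (l/2) := by rw [← Real.exp_add]; ring_nf
  have h5 : Real.exp (-l) = Real.exp (-(l/2)) * Real.exp (-(l/2)) := by
    rw [← Real.exp_add]; ring_nf
  have h6 : Real.exp (l/2) * Real.exp (-(l/2)) = 1 := by rw [← Real.exp_add]; simp
  rw [h1, h2, h4, h5] at h
  rw [Real.sinh_eq] at h3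
  nlinarith

lemma bw_main (P : Polynomial ℝ) (N : ℕ) (hN : P.natDegree ≤ N) (M : ℝ)
    (hM : ∀ x ∈ Icc (-1:ℝ) 1, |P.eval x| ≤ M) (u r : ℝ) (hu : u ∈ Icc (-1:ℝ) 1)
    (z : ℂ) (hz : ‖z - u‖ ≤ r) :
    ‖Polynomial.aeval z P‖ ≤ M * Real.exp (N * Real.sqrt (2 * r)) := by
  obtain ⟨w, hw0, hw1, rfl⟩ := bw_exists_w z
  have hwp : 0 < ‖w‖ := norm_pos_iff.2 hw0
  have hM0 : 0 ≤ M := (abs_nonneg _).trans (hM u hu)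
  let F : ℂ → ℂ := fun w => ∑ k ∈ Finset.range (N + 1),
    ((P.coeff k : ℝ) : ℂ) * ((w ^ 2 + 1) / 2) ^ k * w ^ (N - k)
  have hF : ∀ w : ℂ, w ≠ 0 → F w = w ^ N * Polynomial.aeval ((w + w⁻¹) / 2) P := by
    intro w hw
    rw [Polynomial.aeval_eq_sum_range' (n := N + 1) (by omega), Finset.mul_sum]
    refine Finset.sum_congr rfl fun k hk => ?_
    have hk' : k ≤ N := by simpa [Nat.lt_succ_iff] using hk
    have h1 : (w ^ 2 + 1) / 2 = w * ((w + w⁻¹) / 2) := by field_simp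
    rw [h1, mul_pow, Complex.real_smul]
    have h2 : w ^ N = w ^ k * w ^ (N - k) := by rw [← pow_add]; congr 1; omega
    rw [h2]; ring
  have hFd : Differentiable ℂ F := by
    intro x; unfold F; fun_prop
  have hb : ∀ w ∈ frontier (Metric.ball (0:ℂ) 1), ‖F w‖ ≤ M := by
    intro w hw
    rw [frontier_ball _ one_ne_zero, mem_sphere_zero_iff_norm] at hw
    have hw0 : w ≠ 0 := by rintro rfl; simp at hw
    rw [hF w hw0, norm_mul, norm_pow, hw, one_pow, one_mul]
    have h1 : (w + w⁻¹) / 2 = ((w.re : ℝ) : ℂ) := by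
      rw [Complex.inv_def, Complex.normSq_eq_norm_sq, hw]
      simp [Complex.add_conj]
    rw [h1]
    have h2 : Polynomial.aeval ((w.re : ℝ) : ℂ) P = ((P.eval w.re : ℝ) : ℂ) := by
      have := Polynomial.aeval_algebraMap_apply ℂ w.re P
      simpa using this
    rw [h2, Complex.norm_real]
    apply hM
    have := Complex.abs_re_le_norm w
    rw [hw] at this
    exact abs_le.1 this
  have hFw : ‖F w‖ ≤ M := Complex.norm_le_of_forall_mem_frontier_norm_le
    Metric.isBounded_ball hFd.diffContOnCl hb (by
      rw [closure_ball _ one_ne_zero]; simpa using hw1)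
  rw [hF w hw0, norm_mul, norm_pow] at hFw
  have h1 := bw_log ‖w‖ r hwp hw1 (bw_norm_w w hw0 u r hu hz)
  have h2 : ‖Polynomial.aeval ((w + w⁻¹) / 2) P‖ ≤ M * (‖w‖⁻¹) ^ N := by
    rw [inv_pow, ← div_eq_mul_inv, le_div_iff₀ (by positivity)]; linarith
  refine h2.trans ?_
  gcongr
  rw [Real.exp_nat_mul]
  gcongr

lemma dd_step (Q : Polynomial ℝ) (u δ r B a : ℝ) (hδ : 0 < δ) (hr : 2 * δ ≤ r)
    (ha : a ∈ Icc u (u + δ))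
    (hQ : ∀ z : ℂ, ‖z - u‖ ≤ r → ‖Polynomial.aeval z Q‖ ≤ B) :
    ∀ z : ℂ, ‖z - u‖ ≤ r →
      ‖Polynomial.aeval z (Q /ₘ (Polynomial.X - Polynomial.C a))‖ ≤ B * (4 / r) := by
  intro z hz
  have hr0 : 0 < r := by linarith
  have key : ∀ z : ℂ, Polynomial.aeval z Q - Polynomial.aeval (a:ℂ) Q = (z - a) *
      Polynomial.aeval z (Q /ₘ (Polynomial.X - Polynomial.C a)) := by
    intro z
    have := Polynomial.modByMonic_add_div Q (Polynomial.X - Polynomial.C a)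
    rw [Polynomial.modByMonic_X_sub_C_eq_C_eval] at this
    have h2 := congrArg (Polynomial.aeval z) this
    have h3 : Polynomial.aeval (a : ℂ) Q = ((Q.eval a : ℝ) : ℂ) := by
      have := Polynomial.aeval_algebraMap_apply ℂ a Q
      simpa using this
    rw [← h2, h3]; simp
  have hau : ‖(a:ℂ) - u‖ ≤ δ := by
    rw [← Complex.ofReal_sub, Complex.norm_real, Real.norm_of_nonneg (by linarith [ha.1])]
    linarith [ha.2]
  refine Complex.norm_le_of_forall_mem_frontier_norm_le (U := Metric.ball (u:ℂ) r)
    (f := fun z => Polynomial.aeval z (Q /ₘ (Polynomial.X - Polynomial.C a)))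
    Metric.isBounded_ball (Differentiable.diffContOnCl (Polynomial.differentiable_aeval _)) ?_ (by
      rw [closure_ball _ hr0.ne']; simpa [dist_eq_norm] using hz)
  intro z hz
  rw [frontier_ball _ hr0.ne', mem_sphere_iff_norm] at hz
  have h1 : r / 2 ≤ ‖z - a‖ := by
    have : ‖z - u‖ ≤ ‖z - a‖ + ‖(a:ℂ) - u‖ := by
      simpa using norm_add_le (z - a) ((a:ℂ) - u)
    linarith
  have h2 : ‖z - a‖ * ‖Polynomial.aeval z (Q /ₘ (Polynomial.X - Polynomial.C a))‖ ≤ 2 * B := by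
    rw [← norm_mul, ← key]
    refine (norm_sub_le _ _).trans ?_
    have := hQ z hz.le
    have := hQ a (by linarith)
    linarith
  have h3 := norm_nonneg (Polynomial.aeval z (Q /ₘ (Polynomial.X - Polynomial.C a)))
  rw [← mul_div_assoc, le_div_iff₀ hr0]
  nlinarith

lemma dd_chain (P : Polynomial ℝ) (u δ r B : ℝ) (hδ : 0 < δ) (hr : 2 * δ ≤ r)
    (v : ℕ → ℝ) 
    (hP : ∀ z : ℂ, ‖z - u‖ ≤ r → ‖Polynomial.aeval z P‖ ≤ B) (k : ℕ)
    (hv : ∀ i < k, v i ∈ Icc u (u + δ)) :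
    ∃ H R : Polynomial ℝ, P = (∏ i ∈ Finset.range k, (Polynomial.X - Polynomial.C (v i))) * H + R ∧
      R.degree < k ∧ ∀ z : ℂ, ‖z - u‖ ≤ r → ‖Polynomial.aeval z H‖ ≤ B * (4 / r) ^ k := by
  induction k with
  | zero => exact ⟨P, 0, by simp, by simp, by simpa using hP⟩
  | succ k ih =>
    obtain ⟨H, R, h1, h2, h3⟩ := ih (fun i hi => hv i (by omega))
    refine ⟨H /ₘ (Polynomial.X - Polynomial.C (v k)),
      R + (∏ i ∈ Finset.range k, (Polynomial.X - Polynomial.C (v i))) *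
        Polynomial.C (H.eval (v k)), ?_, ?_, ?_⟩
    · have := Polynomial.modByMonic_add_div H (Polynomial.X - Polynomial.C (v k))
      rw [Polynomial.modByMonic_X_sub_C_eq_C_eval] at this
      rw [Finset.prod_range_succ]
      linear_combination h1 - (∏ i ∈ Finset.range k, (Polynomial.X - Polynomial.C (v i))) * this
    · have hk : (k : WithBot ℕ) < ((k + 1 : ℕ) : WithBot ℕ) := by exact_mod_cast Nat.lt_succ_self k
      have hd : (∏ i ∈ Finset.range k, (Polynomial.X - Polynomial.C (v i))).degree = (k : WithBot ℕ) := by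
        have := Lagrange.degree_nodal (s := Finset.range k) (v := v)
        simpa [Lagrange.nodal] using this
      refine (Polynomial.degree_add_le _ _).trans_lt (max_lt (h2.trans hk) ?_)
      refine (Polynomial.degree_mul_le _ _).trans_lt ?_
      rw [hd]
      calc (k:WithBot ℕ) + (Polynomial.C (H.eval (v k))).degree ≤ (k:WithBot ℕ) + 0 := by gcongr; exact Polynomial.degree_C_le
        _ < ((k + 1 : ℕ) : WithBot ℕ) := by rw [add_zero]; exact hk
    · rw [pow_succ, ← mul_assoc]
      exact dd_step H u δ r _ (v k) hδ hr (hv k (by omega)) h3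

lemma prod_abs_nodes (i q : ℕ) (hi : i ≤ q) :
    ∏ j ∈ (Finset.range (q + 1)).erase i, |(i:ℝ) - j| = (i.factorial : ℝ) * ((q - i).factorial : ℝ) := by
  induction q, hi using Nat.le_induction with
  | base =>
    have h1 : (Finset.range (i + 1)).erase i = Finset.range i := by
      ext j; simp; omega
    rw [h1, Nat.sub_self, Nat.factorial_zero, Nat.cast_one, mul_one,
      ← Finset.prod_range_add_one_eq_factorial, ← Finset.prod_range_reflect]
    push_cast
    refine Finset.prod_congr rfl fun j hj => ?_
    have hj' := Finset.mem_range.1 hj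
    rw [Nat.sub_sub, Nat.cast_sub (by omega)]
    rw [abs_of_nonneg]
    · push_cast; ring
    · have : (j:ℝ) < i := by exact_mod_cast hj'
      linarith
  | succ q hq ih =>
    have h1 : (Finset.range (q + 1 + 1)).erase i = insert (q + 1) ((Finset.range (q + 1)).erase i) := by
      ext j; simp; omega
    rw [h1, Finset.prod_insert (by simp), ih]
    have h2 : q + 1 - i = (q - i) + 1 := by omega
    rw [h2, Nat.factorial_succ]
    push_cast
    rw [Nat.cast_sub hq, abs_sub_comm, abs_of_nonneg]
    · ring
    · have : (i:ℝ) ≤ q := by exact_mod_cast hq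
      push_cast; linarith

lemma lag_basis_bound (v : ℕ → ℝ) (q : ℕ) (u δ h x : ℝ) (hδ : 0 < δ) (hh : 0 < h)
    (hv : ∀ i ≤ q, v i ∈ Icc u (u + δ)) (hx : x ∈ Icc u (u + δ))
    (hsp : ∀ i ≤ q, ∀ j ≤ q, h * |(i:ℝ) - j| ≤ |v i - v j|) (i : ℕ) (hi : i ≤ q) :
    |(Lagrange.basis (Finset.range (q + 1)) v i).eval x| ≤
      (δ / h) ^ q * ((i.factorial : ℝ) * ((q - i).factorial : ℝ))⁻¹ := by
  rw [Lagrange.basis, Polynomial.eval_prod, Finset.abs_prod, ← prod_abs_nodes i q hi]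
  have hc : ((Finset.range (q + 1)).erase i).card = q := by
    rw [Finset.card_erase_of_mem (by simp; omega)]; simp
  rw [← Finset.prod_inv_distrib]
  nth_rw 2 [← hc]
  rw [← Finset.prod_const, ← Finset.prod_mul_distrib]
  refine Finset.prod_le_prod (fun _ _ => abs_nonneg _) fun j hj => ?_
  have hj1 : j ≠ i := (Finset.mem_erase.1 hj).1
  have hj2 : j ≤ q := by have := (Finset.mem_erase.1 hj).2; simp at this; omega
  have h0 : 0 < |(i:ℝ) - j| := by
    apply abs_pos.2; rw [sub_ne_zero]; exact_mod_cast hj1.symm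
  have h1 := hsp i hi j hj2
  have h2 : |x - v j| ≤ δ := by
    have := hv j hj2
    rw [abs_le]; constructor <;> linarith [hx.1, hx.2, this.1, this.2]
  simp only [Lagrange.basisDivisor, Polynomial.eval_mul, Polynomial.eval_C, Polynomial.eval_sub,
    Polynomial.eval_X, abs_mul, abs_inv]
  have h3 : |v i - v j|⁻¹ ≤ (h * |(i:ℝ) - j|)⁻¹ := inv_anti₀ (by positivity) h1
  calc |v i - v j|⁻¹ * |x - v j| ≤ (h * |(i:ℝ) - j|)⁻¹ * δ := by gcongr
    _ = _ := by rw [mul_inv]; ring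

lemma sum_inv_fact (q : ℕ) :
    ∑ i ∈ Finset.range (q + 1), ((i.factorial : ℝ) * ((q - i).factorial : ℝ))⁻¹ =
      2 ^ q / (q.factorial : ℝ) := by
  rw [eq_div_iff (by positivity), Finset.sum_mul]
  have := Nat.sum_range_choose q
  have h2 : (∑ i ∈ Finset.range (q + 1), ((q.choose i : ℕ) : ℝ)) = 2 ^ q := by exact_mod_cast this
  rw [← h2]
  refine Finset.sum_congr rfl fun i hi => ?_
  have : i ≤ q := by simpa [Nat.lt_succ_iff] using hi
  rw [Nat.cast_choose ℝ this]; field_simp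

lemma pick_points (h : ℝ) (hh : 0 < h) (q : ℕ) : ∀ A : Set ℝ, IsCompact A →
    ENNReal.ofReal (q * h) < volume A →
    ∃ v : ℕ → ℝ, (∀ i ≤ q, v i ∈ A) ∧ ∀ i < q, v i + h ≤ v (i + 1) := by
  induction q with
  | zero =>
    intro A hA hvol
    have hne : A.Nonempty := by
      by_contra hne
      rw [Set.not_nonempty_iff_eq_empty] at hne
      simp [hne] at hvol
    obtain ⟨x, hx⟩ := hne
    exact ⟨fun _ => x, fun _ _ => hx, by simp⟩
  | succ q ih =>
    intro A hA hvol
    have hne : A.Nonempty := by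
      by_contra hne
      rw [Set.not_nonempty_iff_eq_empty] at hne
      simp [hne] at hvol
    set x := sInf A
    have hx : x ∈ A := hA.sInf_mem hne
    have hsub : A ⊆ Ico x (x + h) ∪ (A ∩ Ici (x + h)) := by
      intro y hy
      have : x ≤ y := csInf_le hA.bddBelow hy
      by_cases hyy : y < x + h
      · exact Or.inl ⟨this, hyy⟩
      · exact Or.inr ⟨hy, not_lt.1 hyy⟩
    have hle : volume A ≤ ENNReal.ofReal h + volume (A ∩ Ici (x + h)) := by
      refine (measure_mono hsub).trans ((measure_union_le _ _).trans ?_)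
      gcongr
      simp
    have hlt : ENNReal.ofReal (q * h) < volume (A ∩ Ici (x + h)) := by
      by_contra hcon
      push Not at hcon
      have : volume A ≤ ENNReal.ofReal (((q + 1 : ℕ) : ℝ) * h) := by
        refine hle.trans ?_
        calc ENNReal.ofReal h + volume (A ∩ Ici (x + h)) ≤ ENNReal.ofReal h + ENNReal.ofReal (q * h) := by
              gcongr
          _ = _ := by rw [← ENNReal.ofReal_add hh.le (by positivity)]; congr 1; push_cast; ring
      exact absurd hvol (not_lt.2 this)
    obtain ⟨v, hv1, hv2⟩ := ih _ (hA.inter_right isClosed_Ici) hlt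
    refine ⟨fun i => Nat.casesOn i x v, ?_, ?_⟩
    · intro i hi
      cases i with
      | zero => exact hx
      | succ i => exact (hv1 i (by omega)).1
    · intro i hi
      cases i with
      | zero => exact (hv1 0 (by omega)).2
      | succ i => exact hv2 i (by omega)

lemma spacing (h : ℝ) (q : ℕ) (v : ℕ → ℝ) (hv : ∀ i < q, v i + h ≤ v (i + 1)) (i j : ℕ)
    (hij : i ≤ j) (hj : j ≤ q) : h * ((j:ℝ) - i) ≤ v j - v i := by
  induction j, hij using Nat.le_induction with
  | base => simp
  | succ j hij ih =>
    have := ih (by omega)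
    have := hv j (by omega)
    push_cast; linarith

lemma core_s2 (P : Polynomial ℝ) (N : ℕ) (hN : P.natDegree ≤ N) (M : ℝ)
    (hM : ∀ x ∈ Icc (-1:ℝ) 1, |P.eval x| ≤ M) (u δ r : ℝ) (hδ : 0 < δ) (hr : 2 * δ ≤ r)
    (hu : u ∈ Icc (-1:ℝ) 1) (A : Set ℝ) (hA : IsCompact A)
    (hAI : A ⊆ Icc u (u + δ)) (μ ε : ℝ) (hμ : 0 < μ) (hAμ : ENNReal.ofReal μ ≤ volume A)
    (hε : ∀ x ∈ A, |P.eval x| ≤ ε) (q : ℕ) (x : ℝ) (hx : x ∈ Icc u (u + δ)) :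
    |P.eval x| ≤ ε * (Real.exp 1 * (2 * Real.exp 1 * δ / μ) ^ q) +
      M * Real.exp (N * Real.sqrt (2 * r)) * (4 * δ / r) ^ (q + 1) := by
  have hr0 : 0 < r := by linarith
  set h := μ / (q + 1) with hh
  have hh0 : 0 < h := by positivity
  have hlt : ENNReal.ofReal (q * h) < volume A := by
    refine lt_of_lt_of_le ?_ hAμ
    apply (ENNReal.ofReal_lt_ofReal_iff hμ).2
    rw [hh, mul_div_assoc', div_lt_iff₀ (by positivity)]
    nlinarith
  obtain ⟨v, hv1, hv2⟩ := pick_points h hh0 q A hA hlt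
  have hvI : ∀ i ≤ q, v i ∈ Icc u (u + δ) := fun i hi => hAI (hv1 i hi)
  have hsp : ∀ i ≤ q, ∀ j ≤ q, h * |(i:ℝ) - j| ≤ |v i - v j| := by
    intro i hi j hj
    rcases le_total i j with hij | hij
    · have := spacing h q v hv2 i j hij hj
      rw [abs_sub_comm, abs_sub_comm (v i), abs_of_nonneg (by rw [sub_nonneg]; exact_mod_cast hij)]
      exact this.trans (le_abs_self _)
    · have := spacing h q v hv2 j i hij hi
      rw [abs_of_nonneg (by rw [sub_nonneg]; exact_mod_cast hij)]
      exact this.trans (le_abs_self _)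
  have hinj : Set.InjOn v (Finset.range (q + 1) : Set ℕ) := by
    intro i hi j hj hij
    have h1 := hsp i (by simp at hi; omega) j (by simp at hj; omega)
    rw [hij, sub_self, abs_zero] at h1
    by_contra hne
    have : 0 < |(i:ℝ) - j| := by apply abs_pos.2; rw [sub_ne_zero]; exact_mod_cast hne
    nlinarith
  have hB := fun z hz => bw_main P N hN M hM u r hu z hz
  obtain ⟨H, R, e1, e2, e3⟩ := dd_chain P u δ r _ hδ hr v hB (q + 1) (fun i hi => hvI i (by omega))
  have hRv : ∀ i ≤ q, R.eval (v i) = P.eval (v i) := by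
    intro i hi
    rw [e1, Polynomial.eval_add, Polynomial.eval_mul, Polynomial.eval_prod,
      Finset.prod_eq_zero (i := i) (by simp; omega) (by simp)]
    simp
  have hR : |R.eval x| ≤ ε * (Real.exp 1 * (2 * Real.exp 1 * δ / μ) ^ q) := by
    have hε0 : 0 ≤ ε := (abs_nonneg _).trans (hε _ (hv1 0 (by omega)))
    rw [Lagrange.eq_interpolate (s := Finset.range (q + 1)) (v := v) (f := R) hinj (by simpa using e2),
      Lagrange.interpolate_apply, Polynomial.eval_finsetSum]
    calc _ ≤ ∑ i ∈ Finset.range (q + 1), ε * ((δ / h) ^ q * ((i.factorial : ℝ) * ((q - i).factorial : ℝ))⁻¹) := by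
          refine (Finset.abs_sum_le_sum_abs _ _).trans (Finset.sum_le_sum fun i hi => ?_)
          have hi' : i ≤ q := by simpa [Nat.lt_succ_iff] using hi
          rw [Polynomial.eval_mul, Polynomial.eval_C, abs_mul, hRv i hi']
          gcongr
          · exact hε _ (hv1 i hi')
          · exact lag_basis_bound v q u δ h x hδ hh0 hvI hx hsp i hi'
      _ = ε * ((2 * δ / μ) ^ q * (((q:ℝ) + 1) ^ q / (q.factorial : ℝ))) := by
          rw [← Finset.mul_sum, ← Finset.mul_sum, sum_inv_fact]
          congr 1
          rw [mul_div_assoc', mul_div_assoc', ← mul_pow, ← mul_pow]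
          congr 2
          rw [hh]; field_simp
      _ ≤ ε * ((2 * δ / μ) ^ q * Real.exp ((q:ℝ) + 1)) := by
          gcongr
          exact Real.pow_div_factorial_le_exp _ (by positivity) q
      _ = _ := by
          rw [Real.exp_add, ← Real.exp_one_pow q]
          have : (2 * Real.exp 1 * δ / μ) = (2 * δ / μ) * Real.exp 1 := by ring
          rw [this, mul_pow]; ring
  have hH : |H.eval x| ≤ M * Real.exp (N * Real.sqrt (2 * r)) * (4 / r) ^ (q + 1) := by
    have h1 := e3 (x:ℂ) (by
      rw [← Complex.ofReal_sub, Complex.norm_real, Real.norm_of_nonneg (by linarith [hx.1])]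
      linarith [hx.2])
    have h3 : Polynomial.aeval (x : ℂ) H = ((H.eval x : ℝ) : ℂ) := by
      have := Polynomial.aeval_algebraMap_apply ℂ x H
      simpa using this
    rwa [h3, Complex.norm_real, Real.norm_eq_abs] at h1
  have hW : |∏ i ∈ Finset.range (q + 1), (x - v i)| ≤ δ ^ (q + 1) := by
    rw [Finset.abs_prod]
    calc _ ≤ ∏ i ∈ Finset.range (q + 1), δ := by
          refine Finset.prod_le_prod (fun _ _ => abs_nonneg _) fun i hi => ?_
          have := hvI i (by simpa [Nat.lt_succ_iff] using hi)
          rw [abs_le]; constructor <;> linarith [hx.1, hx.2, this.1, this.2]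
      _ = _ := by simp
  rw [e1, Polynomial.eval_add, Polynomial.eval_mul, Polynomial.eval_prod]
  simp only [Polynomial.eval_sub, Polynomial.eval_X, Polynomial.eval_C]
  refine (abs_add_le _ _).trans ?_
  rw [add_comm, abs_mul]
  refine add_le_add hR ?_
  calc _ ≤ δ ^ (q + 1) * (M * Real.exp (N * Real.sqrt (2 * r)) * (4 / r) ^ (q + 1)) := by gcongr
    _ = _ := by
      have : 4 * δ / r = δ * (4 / r) := by ring
      rw [this, mul_pow]; ring

lemma En_nonneg' (f : ℝ → ℝ) (n : ℕ) : 0 ≤ En f n := by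
  apply Real.sInf_nonneg
  rintro _ ⟨P, -, rfl⟩
  apply Real.sSup_nonneg
  rintro _ ⟨x, -, rfl⟩
  exact abs_nonneg _

lemma En_approx (f : ℝ → ℝ) (hf : ContinuousOn f (Icc (-1:ℝ) 1)) (n : ℕ) (t : ℝ)
    (ht : En f n < t) : ∃ P : Polynomial ℝ, P.natDegree ≤ n ∧
      ∀ x ∈ Icc (-1:ℝ) 1, |f x - P.eval x| ≤ t := by
  obtain ⟨_, ⟨P, hP, rfl⟩, hlt⟩ := exists_lt_of_csInf_lt
    (Set.Nonempty.image _ ⟨0, by simp⟩) ht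
  refine ⟨P, hP, fun x hx => le_trans ?_ hlt.le⟩
  refine le_csSup ?_ ⟨x, hx, rfl⟩
  exact (isCompact_Icc.image_of_continuousOn
    ((hf.sub P.continuous.continuousOn).abs)).bddAbove

lemma sublevel_compact (f : ℝ → ℝ) (hf : ContinuousOn f (Icc (-1:ℝ) 1)) (t : ℝ) :
    IsCompact {x : ℝ | x ∈ Icc (-1:ℝ) 1 ∧ |f x| ≤ t} := by
  refine isCompact_Icc.of_isClosed_subset ?_ (fun x hx => hx.1)
  exact hf.abs.preimage_isClosed_of_isClosed isClosed_Icc (isClosed_Iic (a := t))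

lemma local_f (f : ℝ → ℝ) (hf : ContinuousOn f (Icc (-1:ℝ) 1)) (M : ℝ)
    (hM : ∀ x ∈ Icc (-1:ℝ) 1, |f x| ≤ M) (N : ℕ) (η : ℝ) (hη : En f N < η) (hη1 : η ≤ 1)
    (u δ : ℝ) (hδ : 0 < δ) (hδ4 : δ ≤ 1 / 4) (hu : -1 ≤ u) (hu' : u + δ ≤ 1) (t μ : ℝ)
    (hμ : 0 < μ)
    (hAμ : μ ≤ volume.real ({x : ℝ | x ∈ Icc (-1:ℝ) 1 ∧ |f x| ≤ t} ∩ Icc u (u + δ)))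
    (q : ℕ) (x : ℝ) (hx : x ∈ Icc u (u + δ)) :
    |f x| ≤ η + (t + η) * (Real.exp 1 * (2 * Real.exp 1 * δ / μ) ^ q) +
      (M + 1) * Real.exp (N * Real.sqrt (2 * Real.sqrt δ)) * (4 * Real.sqrt δ) ^ (q + 1) := by
  obtain ⟨P, hP, hPf⟩ := En_approx f hf N η hη
  have hs : 0 < Real.sqrt δ := Real.sqrt_pos.2 hδ
  have hss : Real.sqrt δ * Real.sqrt δ = δ := Real.mul_self_sqrt hδ.le
  have hs2 : Real.sqrt δ ≤ 1 / 2 := Real.sqrt_le_iff.2 ⟨by norm_num, by norm_num; linarith⟩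
  have hPf' : ∀ x ∈ Icc (-1:ℝ) 1, |P.eval x| ≤ |f x| + η := by
    intro x hx
    have := abs_sub_abs_le_abs_sub (P.eval x) (f x)
    rw [abs_sub_comm] at this
    linarith [hPf x hx]
  have hc := core_s2 P N hP (M + 1) (fun x hx => by linarith [hPf' x hx, hM x hx]) u δ (Real.sqrt δ)
    hδ (by nlinarith)
    ⟨hu, by linarith⟩ _ ((sublevel_compact f hf t).inter_right isClosed_Icc)
    Set.inter_subset_right μ (t + η) hμ
    (by
      rw [Measure.real] at hAμ
      exact ENNReal.ofReal_le_of_le_toReal hAμ)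
    (fun x hx => by linarith [hPf' x hx.1.1, hx.1.2]) q x hx
  have e : 4 * δ / Real.sqrt δ = 4 * Real.sqrt δ := by
    rw [div_eq_iff hs.ne', mul_assoc, hss]
  rw [e] at hc
  have hx' : x ∈ Icc (-1:ℝ) 1 := ⟨by linarith [hx.1], by linarith [hx.2]⟩
  have := abs_sub_abs_le_abs_sub (f x) (P.eval x)
  linarith [hPf x hx']

lemma cover_idx (K : ℕ) (hK : 0 < K) (x : ℝ) (hx : x ∈ Icc (-1:ℝ) 1) :
    ∃ i < K, x ∈ Icc (-1 + i * (2 / (K:ℝ))) (-1 + i * (2 / (K:ℝ)) + 2 / K) := by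
  have hK' : (0:ℝ) < K := by exact_mod_cast hK
  have h0 : 0 ≤ (x + 1) * K / 2 := by have := hx.1; apply div_nonneg _ (by norm_num); apply mul_nonneg _ hK'.le; linarith
  by_cases h : x = 1
  · refine ⟨K - 1, by omega, ?_⟩
    rw [Nat.cast_sub (by omega), h]
    constructor
    · field_simp; push_cast; linarith
    · apply le_of_eq; field_simp; push_cast; ring
  · have hx1 : x < 1 := lt_of_le_of_ne hx.2 h
    refine ⟨⌊(x + 1) * K / 2⌋₊, ?_, ?_, ?_⟩
    · rw [Nat.floor_lt h0]; nlinarith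
    · have := Nat.floor_le h0
      rw [mul_div_assoc', ← sub_nonneg]
      have e : x - (-1 + (⌊(x + 1) * K / 2⌋₊:ℝ) * 2 / K) = ((x + 1) * K / 2 - ⌊(x + 1) * K / 2⌋₊) * (2 / K) := by
        field_simp; ring
      rw [e]; apply mul_nonneg <;> [linarith; positivity]
    · have := (Nat.lt_floor_add_one ((x + 1) * K / 2)).le
      rw [← sub_nonneg]
      have e : (-1 + (⌊(x + 1) * K / 2⌋₊:ℝ) * (2 / K) + 2 / K) - x = (⌊(x + 1) * K / 2⌋₊ + 1 - (x + 1) * K / 2) * (2 / K) := by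
        field_simp; ring
      rw [e]; apply mul_nonneg <;> [linarith; positivity]

lemma pigeon (K : ℕ) (hK : 0 < K) (S : Set ℝ) (hS : S ⊆ Icc (-1:ℝ) 1) :
    ∃ i < K, volume.real S / K ≤
      volume.real (S ∩ Icc (-1 + i * (2 / (K:ℝ))) (-1 + i * (2 / (K:ℝ)) + 2 / K)) := by
  have hK' : (0:ℝ) < K := by exact_mod_cast hK
  have hle : volume.real S ≤ ∑ i ∈ Finset.range K,
      volume.real (S ∩ Icc (-1 + i * (2 / (K:ℝ))) (-1 + i * (2 / (K:ℝ)) + 2 / K)) := by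
    refine le_trans ?_ (measureReal_biUnion_finset_le _ _)
    apply measureReal_mono
    · intro x hx
      obtain ⟨i, hi, hxi⟩ := cover_idx K hK x (hS hx)
      simp only [mem_iUnion, Finset.mem_range]
      exact ⟨i, hi, hx, hxi⟩
    · refine ne_top_of_le_ne_top (b := volume (Icc (-1:ℝ) 1)) (by simp) (measure_mono ?_)
      intro x hx
      simp only [mem_iUnion] at hx
      obtain ⟨i, _, hx, _⟩ := hx
      exact hS hx
  obtain ⟨i, hi, h⟩ := Finset.exists_le_of_sum_le (s := Finset.range K)
    (f := fun _ => volume.real S / K)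
    (g := fun i : ℕ => volume.real (S ∩ Icc (-1 + i * (2 / (K:ℝ))) (-1 + i * (2 / (K:ℝ)) + 2 / K))) 
    (by simpa using hK.ne') (by
      rw [Finset.sum_const, Finset.card_range, nsmul_eq_mul, mul_div_cancel₀ _ hK'.ne']; exact hle)
  exact ⟨i, Finset.mem_range.1 hi, h⟩

lemma zero_prop (f : ℝ → ℝ) (hf : ContinuousOn f (Icc (-1:ℝ) 1)) (M : ℝ)
    (hM : ∀ x ∈ Icc (-1:ℝ) 1, |f x| ≤ M) (β : ℝ) (hβ : 0 < β)
    (n : ℕ → ℕ) (hn : Tendsto n atTop atTop)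
    (happrox : ∀ j, En f (n j) ≤ Real.exp (-β * (n j : ℝ))) (θ : ℝ) (hθ : 0 < θ) (hθ1 : θ ≤ 1) :
    ∃ δ₀ > 0, ∀ δ, 0 < δ → δ ≤ δ₀ → ∀ u, -1 ≤ u → u + δ ≤ 1 →
      θ * δ ≤ volume.real ({x : ℝ | x ∈ Icc (-1:ℝ) 1 ∧ |f x| ≤ 0} ∩ Icc u (u + δ)) →
      ∀ x ∈ Icc u (u + δ), f x = 0 := by
  have he : 2 < Real.exp 1 := by have := Real.exp_one_gt_d9; linarith
  have hc1 : 1 < 2 * Real.exp 1 / θ := by rw [lt_div_iff₀ hθ]; linarith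
  set c := Real.log (2 * Real.exp 1 / θ) with hc
  have hc0 : 0 < c := Real.log_pos hc1
  set κ := β / (2 * c) with hκ
  have hκ0 : 0 < κ := by positivity
  have hM0 : 0 ≤ M := (abs_nonneg _).trans (hM 0 (by norm_num))
  refine ⟨min (1/4) ((Real.exp (-2 / κ) / 4) ^ 2), by positivity, ?_⟩
  intro δ hδ hδ0 u hu hu' hvol x hx
  have hδ4 : δ ≤ 1/4 := hδ0.trans (min_le_left _ _)
  have hs : 0 < Real.sqrt δ := Real.sqrt_pos.2 hδ
  have hs1 : 4 * Real.sqrt δ ≤ Real.exp (-2 / κ) := by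
    have : Real.sqrt δ ≤ Real.exp (-2 / κ) / 4 :=
      Real.sqrt_le_iff.2 ⟨by positivity, hδ0.trans (min_le_right _ _)⟩
    linarith
  have hs2 : Real.sqrt (2 * Real.sqrt δ) ≤ 1 := by
    have : Real.sqrt δ ≤ 1/2 := Real.sqrt_le_iff.2 ⟨by norm_num, by norm_num; linarith⟩
    exact Real.sqrt_le_iff.2 ⟨by norm_num, by linarith⟩
  have hnR : Tendsto (fun j => (n j : ℝ)) atTop atTop := tendsto_natCast_atTop_atTop.comp hn
  have hexp : ∀ a : ℝ, 0 < a → Tendsto (fun j => Real.exp (-(a * (n j : ℝ)))) atTop (nhds 0) := by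
    intro a ha
    exact Real.tendsto_exp_neg_atTop_nhds_zero.comp (hnR.const_mul_atTop ha)
  have hlim : Tendsto (fun j => 2 * Real.exp (-(β * (n j : ℝ))) +
      2 * Real.exp 1 * Real.exp (-(β / 2 * (n j : ℝ))) + (M + 1) * Real.exp (-(1 * (n j : ℝ))))
      atTop (nhds 0) := by
    have := (((hexp β hβ).const_mul 2).add ((hexp (β/2) (by positivity)).const_mul (2 * Real.exp 1))).add
      ((hexp 1 one_pos).const_mul (M + 1))
    simpa using this
  have hev : ∀ᶠ j in atTop, |f x| ≤ 2 * Real.exp (-(β * (n j : ℝ))) +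
      2 * Real.exp 1 * Real.exp (-(β / 2 * (n j : ℝ))) + (M + 1) * Real.exp (-(1 * (n j : ℝ))) := by
    have h2 : ∀ᶠ j in atTop, 2 * Real.exp (-(β * (n j : ℝ))) ≤ 1 := by
      have := (hexp β hβ).const_mul 2
      rw [mul_zero] at this
      exact (this.eventually_lt_const one_pos).mono fun _ h => h.le
    filter_upwards [h2] with j hj
    set N := n j
    have hl := local_f f hf M hM N (2 * Real.exp (-(β * (N : ℝ)))) (by
      have := happrox j
      rw [neg_mul] at this
      have := Real.exp_pos (-(β * (N : ℝ)))
      linarith) hj u δ hδ hδ4 hu hu' 0 (θ * δ) (by positivity) hvol ⌊κ * N⌋₊ x hx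
    refine hl.trans ?_
    have q1 : ((⌊κ * N⌋₊ : ℕ) : ℝ) ≤ κ * N := Nat.floor_le (by positivity)
    have q2 : κ * N ≤ (⌊κ * N⌋₊ : ℝ) + 1 := (Nat.lt_floor_add_one _).le
    generalize ⌊κ * N⌋₊ = q at q1 q2
    have b1 : (2 * Real.exp 1 * δ / (θ * δ)) ^ q ≤ Real.exp (β / 2 * N) := by
      have e1 : 2 * Real.exp 1 * δ / (θ * δ) = Real.exp c := by
        rw [hc, Real.exp_log (by linarith)]; field_simp
      rw [e1, ← Real.exp_nat_mul]
      apply Real.exp_le_exp.2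
      calc q * c ≤ κ * N * c := by gcongr
        _ = _ := by rw [hκ]; field_simp
    have b2 : (4 * Real.sqrt δ) ^ (q + 1) ≤ Real.exp (-(2 * N)) := by
      calc (4 * Real.sqrt δ) ^ (q + 1) ≤ (Real.exp (-2 / κ)) ^ (q + 1) := by gcongr
        _ = Real.exp (((q + 1 : ℕ) : ℝ) * (-2 / κ)) := by rw [Real.exp_nat_mul]
        _ ≤ _ := by
          apply Real.exp_le_exp.2
          have : 2 * (N:ℝ) ≤ ((q:ℝ) + 1) * (2 / κ) := by
            rw [mul_div_assoc', le_div_iff₀ hκ0]; nlinarith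
          push_cast; rw [neg_div]; linarith
    have b3 : Real.exp (N * Real.sqrt (2 * Real.sqrt δ)) ≤ Real.exp N := by
      apply Real.exp_le_exp.2
      have : (0:ℝ) ≤ N := by positivity
      nlinarith
    rw [zero_add]
    refine add_le_add (add_le_add le_rfl ?_) ?_
    · calc _ ≤ 2 * Real.exp (-(β * N)) * (Real.exp 1 * Real.exp (β / 2 * N)) := by gcongr
        _ = 2 * Real.exp 1 * (Real.exp (-(β * N)) * Real.exp (β / 2 * N)) := by ring
        _ = _ := by rw [← Real.exp_add]; ring_nf
    · calc _ ≤ (M + 1) * Real.exp N * Real.exp (-(2 * N)) := by gcongr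
        _ = _ := by rw [mul_assoc, ← Real.exp_add]; ring_nf
  have := ge_of_tendsto hlim hev
  exact abs_eq_zero.1 (le_antisymm this (abs_nonneg _))

lemma zero_null (f : ℝ → ℝ) (hf : ContinuousOn f (Icc (-1:ℝ) 1))
    (hf0 : ∃ x ∈ Icc (-1:ℝ) 1, f x ≠ 0) (M : ℝ)
    (hM : ∀ x ∈ Icc (-1:ℝ) 1, |f x| ≤ M) (β : ℝ) (hβ : 0 < β)
    (n : ℕ → ℕ) (hn : Tendsto n atTop atTop)
    (happrox : ∀ j, En f (n j) ≤ Real.exp (-β * (n j : ℝ))) :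
    volume {x : ℝ | x ∈ Icc (-1:ℝ) 1 ∧ |f x| ≤ 0} = 0 := by
  by_contra hne
  set Z := {x : ℝ | x ∈ Icc (-1:ℝ) 1 ∧ |f x| ≤ 0} with hZ
  have hZs : Z ⊆ Icc (-1:ℝ) 1 := fun x hx => hx.1
  have hfin : volume Z ≠ ⊤ := ne_top_of_le_ne_top (b := volume (Icc (-1:ℝ) 1)) (by simp) (measure_mono hZs)
  have hm : 0 < volume.real Z := ENNReal.toReal_pos hne hfin
  set θ := min (volume.real Z / 2) (1/2) with hθ
  have hθ0 : 0 < θ := by positivity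
  obtain ⟨δ₀, hδ₀, hprop⟩ := zero_prop f hf M hM β hβ n hn happrox θ hθ0
    ((min_le_right _ _).trans (by norm_num))
  obtain ⟨K, hK⟩ := exists_nat_gt (4 / δ₀)
  have hK' : (0:ℝ) < K := lt_trans (by positivity) hK
  have hK0 : 0 < K := by exact_mod_cast hK'
  have hd : 2 * (2 / (K:ℝ)) ≤ δ₀ := by
    rw [div_lt_iff₀ hδ₀] at hK
    rw [mul_div_assoc', div_le_iff₀ hK']; linarith
  set δ := 2 / (K:ℝ) with hδ
  have hδp : 0 < δ := by positivity
  have hKδ : K * δ = 2 := by rw [hδ]; field_simp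
  have hend : ∀ i : ℕ, i < K → -1 + i * δ + δ ≤ 1 := by
    intro i hi
    have : ((i:ℝ) + 1) ≤ K := by exact_mod_cast hi
    nlinarith
  have hbeg : ∀ i : ℕ, -1 ≤ -1 + i * δ := by intro i; have : 0 ≤ i * δ := by positivity
                                             linarith
  let G : ℕ → Prop := fun i => ∀ x ∈ Icc (-1 + i * δ) (-1 + i * δ + δ), f x = 0
  have hdouble : ∀ i : ℕ, i + 1 < K → ∀ i' : ℕ, (i' = i ∨ i' = i + 1) → G i' → G i ∧ G (i + 1) := by
    intro i hi i' hi' hG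
    have h1 := hend (i + 1) hi
    push_cast at h1
    have hz : ∀ x ∈ Icc (-1 + i * δ) (-1 + i * δ + 2 * δ), f x = 0 := by
      refine hprop (2 * δ) (by positivity) hd (-1 + i * δ) (hbeg i) (by linarith) ?_
      have hsub : Icc (-1 + i' * δ) (-1 + i' * δ + δ) ⊆ Z ∩ Icc (-1 + i * δ) (-1 + i * δ + 2 * δ) := by
        intro x hx
        have hx2 : x ∈ Icc (-1 + i * δ) (-1 + i * δ + 2 * δ) := by
          rcases hi' with rfl | rfl
          · exact ⟨hx.1, by linarith [hx.2]⟩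
          · have := hx.1; have := hx.2
            push_cast at *
            constructor <;> linarith
        refine ⟨⟨⟨by linarith [hx2.1, hbeg i], by linarith [hx2.2]⟩, ?_⟩, hx2⟩
        rw [hG x hx]; simp
      have hv := measureReal_mono (μ := volume) hsub (ne_top_of_le_ne_top hfin (measure_mono inter_subset_left))
      rw [Real.volume_real_Icc_of_le (by linarith)] at hv
      have : θ ≤ 1/2 := min_le_right _ _
      nlinarith
    refine ⟨fun x hx => hz x ⟨hx.1, by linarith [hx.2]⟩, fun x hx => hz x ?_⟩
    have := hx.1; have := hx.2
    push_cast at *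
    constructor <;> linarith
  obtain ⟨i0, hi0, hvol⟩ := pigeon K hK0 Z hZs
  have hG0 : G i0 := by
    refine hprop δ hδp (by linarith) _ (hbeg i0) (hend i0 hi0) (le_trans ?_ hvol)
    have : θ ≤ volume.real Z / 2 := min_le_left _ _
    calc θ * δ ≤ volume.real Z / 2 * δ := by gcongr
      _ = _ := by rw [hδ]; ring
  have hdown : ∀ d : ℕ, G (i0 - d) := by
    intro d
    induction d with
    | zero => simpa using hG0
    | succ d ih =>
      by_cases h : i0 - d = 0
      · have : i0 - (d + 1) = i0 - d := by omega
        rw [this]; exact ih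
      · exact (hdouble (i0 - (d + 1)) (by omega) (i0 - d) (by omega) ih).1
  have hup : ∀ i : ℕ, i < K → G i := by
    intro i
    induction i with
    | zero => intro _; have := hdown i0; rwa [Nat.sub_self] at this
    | succ i ih => intro h; exact (hdouble i h i (Or.inl rfl) (ih (by omega))).2
  obtain ⟨x, hx, hfx⟩ := hf0
  obtain ⟨i, hi, hxi⟩ := cover_idx K hK0 x hx
  exact hfx (hup i hi x hxi)

lemma step_raw (f : ℝ → ℝ) (hf : ContinuousOn f (Icc (-1:ℝ) 1)) (M : ℝ)
    (hM : ∀ x ∈ Icc (-1:ℝ) 1, |f x| ≤ M) (N : ℕ) (E : ℝ) (hEN : 0 < En f N) (hEN1 : En f N ≤ 1 / 2)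
    (hm : 0 < mf f E) (hm1 : mf f E ≤ 1 / 16) (hm' : 0 < mf f (En f N)) (q : ℕ) :
    E ≤ 2 * En f N + 3 * En f N * (Real.exp 1 * (4 * Real.exp 1 / mf f (En f N)) ^ q) +
      (M + 1) * Real.exp (2 * N * Real.sqrt (Real.sqrt (mf f E))) *
        (8 * Real.sqrt (mf f E)) ^ (q + 1) := by
  have hM0 : 0 ≤ M := (abs_nonneg _).trans (hM 0 (by norm_num))
  set m := mf f E with hmdef
  set m' := mf f (En f N) with hmdef'
  set K := ⌊1 / m⌋₊ with hKdef
  have hK1 : (K:ℝ) ≤ 1 / m := Nat.floor_le (by positivity)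
  have hK2 : 1 / m < K + 1 := Nat.lt_floor_add_one _
  have h16 : 16 ≤ 1 / m := by rw [le_div_iff₀ hm]; linarith
  have hK' : (0:ℝ) < K := by linarith
  have hK0 : 0 < K := by exact_mod_cast hK'
  have hd1 : 2 * m ≤ 2 / (K:ℝ) := by
    rw [le_div_iff₀ hm] at hK1
    rw [le_div_iff₀ hK']; linarith
  have hd2 : 2 / (K:ℝ) ≤ 4 * m := by
    have : 1 / m ≤ 2 * K := by linarith
    rw [div_le_iff₀ hm] at this
    rw [div_le_iff₀ hK']; linarith
  obtain ⟨i, hi, hvol⟩ := pigeon K hK0 {x : ℝ | x ∈ Icc (-1:ℝ) 1 ∧ |f x| ≤ En f N}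
    (fun x hx => hx.1)
  set δ := 2 / (K:ℝ) with hδ
  have hδp : 0 < δ := by positivity
  have hKδ : K * δ = 2 := by rw [hδ]; field_simp
  have hend : -1 + i * δ + δ ≤ 1 := by
    have : ((i:ℝ) + 1) ≤ K := by exact_mod_cast hi
    nlinarith
  have hbeg : -1 ≤ -1 + i * δ := by
    have : 0 ≤ i * δ := by positivity
    linarith
  have hvol' : m' / K ≤ _ := hvol
  have hex : ∃ x ∈ Icc (-1 + i * δ) (-1 + i * δ + δ), E < |f x| := by
    by_contra hcon
    push Not at hcon
    have hsub : Icc (-1 + i * δ) (-1 + i * δ + δ) ⊆ {x : ℝ | x ∈ Icc (-1:ℝ) 1 ∧ |f x| ≤ E} :=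
      fun x hx => ⟨⟨by linarith [hx.1], by linarith [hx.2]⟩, hcon x hx⟩
    have hv := measureReal_mono (μ := volume) hsub ((sublevel_compact f hf E).measure_lt_top.ne)
    rw [Real.volume_real_Icc_of_le (by linarith)] at hv
    have : volume.real {x : ℝ | x ∈ Icc (-1:ℝ) 1 ∧ |f x| ≤ E} = m := rfl
    linarith
  obtain ⟨x, hx, hEx⟩ := hex
  have hl := local_f f hf M hM N (2 * En f N) (by linarith) (by linarith) (-1 + i * δ) δ hδp
    (by linarith) hbeg hend (En f N) (m' / K) (by positivity) hvol' q x hx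
  have e1 : 2 * Real.exp 1 * δ / (m' / K) = 4 * Real.exp 1 / m' := by
    rw [hδ]; field_simp; ring
  have hsd : Real.sqrt δ ≤ 2 * Real.sqrt m := by
    apply Real.sqrt_le_iff.2 ⟨by positivity, ?_⟩
    rw [mul_pow, Real.sq_sqrt hm.le]; linarith
  have hsd2 : Real.sqrt (2 * Real.sqrt δ) ≤ 2 * Real.sqrt (Real.sqrt m) := by
    apply Real.sqrt_le_iff.2 ⟨by positivity, ?_⟩
    rw [mul_pow, Real.sq_sqrt (Real.sqrt_nonneg _)]; linarith
  rw [e1] at hl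
  refine hEx.le.trans (hl.trans ?_)
  have e2 : En f N + 2 * En f N = 3 * En f N := by ring
  rw [e2]
  gcongr ?_ + ?_ * ?_ * ?_ ^ _
  · exact le_rfl
  · apply Real.exp_le_exp.2
    calc (N:ℝ) * Real.sqrt (2 * Real.sqrt δ) ≤ N * (2 * Real.sqrt (Real.sqrt m)) := by gcongr
      _ = _ := by ring
  · linarith

/-- purely real-analytic consequence of `step_raw` -/
lemma step_log (E E' m m' M N β : ℝ) (hM : 0 ≤ M) (hN : 0 ≤ N) (hE : 0 < E) (hE1 : E ≤ 1) (hE' : 0 < E')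
    (hEE : 8 * E' ≤ E) (hm : 0 < m) (hm1 : 4 * Real.log 8 < - Real.log m) (hm' : 0 < m')
    (hm1' : Real.log (4 * Real.exp 1) ≤ - Real.log m') (hβ : 0 < β)
    (hNβ : β * N ≤ - Real.log E')
    (h : ∀ q : ℕ, E ≤ 2 * E' + 3 * E' * (Real.exp 1 * (4 * Real.exp 1 / m') ^ q) +
      (M + 1) * Real.exp (2 * N * Real.sqrt (Real.sqrt m)) * (8 * Real.sqrt m) ^ (q + 1)) :
    (- Real.log m) * (- Real.log E' - (- Real.log E) - Real.log (6 * Real.exp 1)) ≤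
      8 * (- Real.log m') * (- Real.log E + Real.log (4 * (M + 1)) +
        2 * Real.sqrt (Real.sqrt m) / β * (- Real.log E')) := by
  set s := Real.sqrt (Real.sqrt m) with hs
  have hs0 : 0 ≤ s := Real.sqrt_nonneg _
  have hsm : 0 < Real.sqrt m := Real.sqrt_pos.2 hm
  have hl8 : 0 < Real.log 8 := Real.log_pos (by norm_num)
  set a := - Real.log (8 * Real.sqrt m) with ha
  have ha1 : - Real.log m / 4 ≤ a := by
    rw [ha, Real.log_mul (by norm_num) hsm.ne', Real.log_sqrt hm.le]; linarith
  have ha0 : 0 < a := by linarith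
  have hc1 : 0 ≤ Real.log (4 * (M + 1)) := Real.log_nonneg (by linarith)
  have hL : 0 ≤ - Real.log E := by have := Real.log_nonpos hE.le hE1; linarith
  set T := - Real.log E + Real.log (4 * (M + 1)) + 2 * N * s with hT
  have hT0 : 0 ≤ T := by positivity
  have q1 : ((⌊T / a⌋₊ : ℕ) : ℝ) ≤ T / a := Nat.floor_le (by positivity)
  have q2 : T / a ≤ (⌊T / a⌋₊ : ℝ) + 1 := (Nat.lt_floor_add_one _).le
  have hq := h ⌊T / a⌋₊
  generalize ⌊T / a⌋₊ = q at q1 q2 hq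
  rw [le_div_iff₀ ha0] at q1
  rw [div_le_iff₀ ha0] at q2
  have b1 : (8 * Real.sqrt m) ^ (q + 1) ≤ Real.exp (-T) := by
    have : 8 * Real.sqrt m = Real.exp (-a) := by rw [ha, neg_neg, Real.exp_log (by positivity)]
    rw [this, ← Real.exp_nat_mul]
    apply Real.exp_le_exp.2
    push_cast; linarith
  have b2 : (M + 1) * Real.exp (2 * N * s) * (8 * Real.sqrt m) ^ (q + 1) ≤ E / 4 := by
    calc _ ≤ (M + 1) * Real.exp (2 * N * s) * Real.exp (-T) := by gcongr
      _ = (M + 1) * (Real.exp (Real.log E) * Real.exp (- Real.log (4 * (M + 1)))) := by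
        rw [mul_assoc, ← Real.exp_add, ← Real.exp_add, hT]; ring_nf
      _ = E / 4 := by
        rw [Real.exp_neg, Real.exp_log hE, Real.exp_log (by positivity)]; field_simp
  have b3 : E ≤ 6 * Real.exp 1 * E' * (4 * Real.exp 1 / m') ^ q := by linarith
  have b4 := Real.log_le_log hE b3
  rw [Real.log_mul (by positivity) (by positivity), Real.log_mul (by positivity) (by positivity),
    Real.log_pow, Real.log_div (by positivity) (by positivity)] at b4
  have hl' : 0 ≤ - Real.log m' := by
    have : 0 ≤ Real.log (4 * Real.exp 1) := Real.log_nonneg (by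
      have := Real.add_one_le_exp 1; linarith)
    linarith
  have hq0 : (0:ℝ) ≤ q := by positivity
  have b5 : - Real.log E' - (- Real.log E) - Real.log (6 * Real.exp 1) ≤ q * (2 * (- Real.log m')) := by
    nlinarith
  have hl0 : 0 ≤ - Real.log m := by linarith
  have b6 : q * (- Real.log m) ≤ 4 * T := by nlinarith
  have b7 : T ≤ - Real.log E + Real.log (4 * (M + 1)) + 2 * s / β * (- Real.log E') := by
    have : 2 * N * s ≤ 2 * s / β * (- Real.log E') := by
      rw [div_mul_eq_mul_div, le_div_iff₀ hβ]; nlinarith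
    linarith
  calc _ ≤ (- Real.log m) * (q * (2 * (- Real.log m'))) := by gcongr
    _ = (q * (- Real.log m)) * (2 * (- Real.log m')) := by ring
    _ ≤ (4 * T) * (2 * (- Real.log m')) := by gcongr
    _ = 8 * (- Real.log m') * T := by ring
    _ ≤ _ := by gcongr

lemma mf_tendsto_s2 (f : ℝ → ℝ) (hf : ContinuousOn f (Icc (-1:ℝ) 1))
    (h0 : volume {x : ℝ | x ∈ Icc (-1:ℝ) 1 ∧ |f x| ≤ 0} = 0) :
    Tendsto (mf f) (nhdsWithin 0 (Ioi 0)) (nhds 0) := by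
  have h := tendsto_measure_biInter_gt (μ := volume) (a := (0:ℝ))
    (s := fun t => {x : ℝ | x ∈ Icc (-1:ℝ) 1 ∧ |f x| ≤ t})
    (fun r _ => (sublevel_compact f hf r).measurableSet.nullMeasurableSet)
    (fun i j _ hij x hx => ⟨hx.1, hx.2.trans hij⟩)
    ⟨1, one_pos, (sublevel_compact f hf 1).measure_lt_top.ne⟩
  have e : (⋂ r > (0:ℝ), {x : ℝ | x ∈ Icc (-1:ℝ) 1 ∧ |f x| ≤ r}) =
      {x : ℝ | x ∈ Icc (-1:ℝ) 1 ∧ |f x| ≤ 0} := by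
    ext x
    simp only [mem_iInter, mem_setOf_eq]
    constructor
    · intro hx
      exact ⟨(hx 1 one_pos).1, le_of_forall_gt_imp_ge_of_dense fun r hr => (hx r hr).2⟩
    · intro hx r hr
      exact ⟨hx.1, hx.2.trans (le_of_lt hr)⟩
  rw [e, h0] at h
  have := (ENNReal.tendsto_toReal ENNReal.zero_ne_top).comp h
  rw [ENNReal.toReal_zero] at this
  exact this

theorem bernstein_level_sets_En_version
    (f : ℝ → ℝ) (hf : ContinuousOn f (Set.Icc (-1:ℝ) 1))
    (hf0 : ∃ x ∈ Set.Icc (-1:ℝ) 1, f x ≠ 0)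
    (β : ℝ) (hβ : 0 < β)
    (n : ℕ → ℕ) (hmono : StrictMono n) (hpos : ∀ j, 0 < n j)
    (hlac : Tendsto (fun j => (n (j+1) : ℝ) / (n j : ℝ)) atTop atTop)
    (happrox : ∀ j, En f (n j) ≤ Real.exp (-β * (n j : ℝ)))
    (hE : Tendsto (fun j => |Real.log (En f (n (j+1)))| / |Real.log (En f (n j))|)
      atTop atTop)
    (hm : ∀ j, 0 < mf f (En f (n j)) ∧ mf f (En f (n j)) < 1) :
    Tendsto (fun j => |Real.log (mf f (En f (n (j+1))))| /
      |Real.log (mf f (En f (n j)))|) atTop atTop := by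
  obtain ⟨M, hM⟩ := isCompact_Icc.exists_bound_of_continuousOn hf
  have hM : ∀ x ∈ Icc (-1:ℝ) 1, |f x| ≤ M := hM
  have hM0 : 0 ≤ M := (abs_nonneg _).trans (hM 0 (by norm_num))
  have hn : Tendsto n atTop atTop := hmono.tendsto_atTop
  have hnR : Tendsto (fun j => (n j : ℝ)) atTop atTop := tendsto_natCast_atTop_atTop.comp hn
  have hE1 : ∀ j, En f (n j) ≤ 1 := fun j => (happrox j).trans (by
    rw [Real.exp_le_one_iff, neg_mul]
    have : 0 ≤ β * (n j : ℝ) := by positivity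
    linarith)
  have hEpos : ∀ᶠ j in atTop, 0 < En f (n j) := by
    filter_upwards [hE.eventually_gt_atTop 0] with j hj
    refine lt_of_le_of_ne (En_nonneg' f _) fun h => ?_
    rw [← h] at hj; simp at hj
  have hEpos1 : ∀ᶠ j in atTop, 0 < En f (n (j + 1)) := (tendsto_add_atTop_nat 1).eventually hEpos
  have hE0 : Tendsto (fun j => En f (n j)) atTop (nhds 0) := by
    refine squeeze_zero (fun j => En_nonneg' f _) happrox ?_
    have := Real.tendsto_exp_neg_atTop_nhds_zero.comp (hnR.const_mul_atTop hβ)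
    simpa [Function.comp_def] using this
  have hm0 : Tendsto (fun j => mf f (En f (n j))) atTop (nhds 0) :=
    (mf_tendsto_s2 f hf (zero_null f hf hf0 M hM β hβ n hn happrox)).comp
      (tendsto_nhdsWithin_iff.2 ⟨hE0, hEpos⟩)
  set m : ℕ → ℝ := fun j => mf f (En f (n j)) with hmdef
  set L : ℕ → ℝ := fun j => - Real.log (En f (n j)) with hL
  set l : ℕ → ℝ := fun j => - Real.log (m j) with hl
  have hL0 : ∀ j, 0 ≤ L j := fun j => by
    have := Real.log_nonpos (En_nonneg' f (n j)) (hE1 j); simp only [hL]; linarith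
  have hlpos : ∀ j, 0 < l j := fun j => by
    have := Real.log_neg (hm j).1 (hm j).2; simp only [hl]; linarith
  have hLn : ∀ᶠ j in atTop, β * n j ≤ L j := by
    filter_upwards [hEpos] with j hj
    have := Real.log_le_log hj (happrox j)
    rw [Real.log_exp] at this
    simp only [hL]; linarith
  have hLtop : Tendsto L atTop atTop :=
    tendsto_atTop_mono' _ hLn (hnR.const_mul_atTop hβ)
  have hLtop1 : Tendsto (fun j => L (j + 1)) atTop atTop := hLtop.comp (tendsto_add_atTop_nat 1)
  have hltop : Tendsto l atTop atTop := by
    have h1 : Tendsto m atTop (nhdsWithin 0 (Ioi 0)) :=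
      tendsto_nhdsWithin_iff.2 ⟨hm0, Eventually.of_forall fun j => (hm j).1⟩
    exact tendsto_neg_atBot_atTop.comp (Real.tendsto_log_nhdsGT_zero.comp h1)
  have hLabs : ∀ j, |Real.log (En f (n j))| = L j := fun j => by
    rw [← abs_neg]; exact abs_of_nonneg (hL0 j)
  have hlabs : ∀ j, |Real.log (mf f (En f (n j)))| = l j := fun j => by
    rw [← abs_neg]; exact abs_of_nonneg (hlpos j).le
  simp only [hLabs] at hE
  simp only [hlabs]
  set c1 := Real.log (4 * (M + 1)) with hc1
  set c2 := Real.log (6 * Real.exp 1) with hc2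
  have hc1p : 0 < c1 := Real.log_pos (by linarith)
  -- the ratio of consecutive logs
  have hρ : Tendsto (fun j => L j / L (j + 1)) atTop (nhds 0) := by
    have := hE.inv_tendsto_atTop
    refine this.congr fun j => ?_
    simp
  have hc1L : Tendsto (fun j => c1 / L (j + 1)) atTop (nhds 0) := hLtop1.const_div_atTop c1
  have hc2L : Tendsto (fun j => c2 / L (j + 1)) atTop (nhds 0) := hLtop1.const_div_atTop c2
  have hs : Tendsto (fun j => 2 * Real.sqrt (Real.sqrt (m j)) / β) atTop (nhds 0) := by
    have : Tendsto (fun x : ℝ => 2 * Real.sqrt (Real.sqrt x) / β) (nhds 0) (nhds 0) := by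
      have hc : Continuous (fun x : ℝ => 2 * Real.sqrt (Real.sqrt x) / β) := by fun_prop
      simpa using hc.tendsto 0
    exact this.comp hm0
  have hnum : Tendsto (fun j => 1 - L j / L (j + 1) - c2 / L (j + 1)) atTop (nhds 1) := by
    simpa using (tendsto_const_nhds.sub hρ).sub hc2L
  have hden : Tendsto (fun j => 8 * (L j / L (j + 1) + c1 / L (j + 1) +
      2 * Real.sqrt (Real.sqrt (m j)) / β)) atTop (nhds 0) := by
    simpa using ((hρ.add hc1L).add hs).const_mul 8
  have hL1pos : ∀ᶠ j in atTop, 0 < L (j + 1) := hLtop1.eventually_gt_atTop 0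
  have hdenpos : ∀ᶠ j in atTop, 0 < 8 * (L j / L (j + 1) + c1 / L (j + 1) +
      2 * Real.sqrt (Real.sqrt (m j)) / β) := by
    filter_upwards [hL1pos] with j hj
    have := hL0 j
    positivity
  have hdeninv := (tendsto_nhdsWithin_iff.2 ⟨hden, hdenpos⟩ :
    Tendsto _ atTop (nhdsWithin (0:ℝ) (Ioi 0))).inv_tendsto_nhdsGT_zero
  have hmain := hnum.pos_mul_atTop one_pos hdeninv
  refine tendsto_atTop_mono' _ ?_ hmain
  have hgap : ∀ᶠ j in atTop, 8 * En f (n (j + 1)) ≤ En f (n j) := by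
    filter_upwards [hE.eventually_ge_atTop 2, hLtop.eventually_ge_atTop (Real.log 8), hEpos, hEpos1]
      with j h1 h2 h3 h4
    have h8 : 0 < Real.log 8 := Real.log_pos (by norm_num)
    have hLj : 0 < L j := by linarith
    rw [le_div_iff₀ hLj] at h1
    apply (Real.log_le_log_iff (by positivity) h3).1
    rw [Real.log_mul (by norm_num) h4.ne']
    simp only [hL] at *
    linarith
  filter_upwards [hgap, hEpos, hEpos1, hL1pos, hdenpos, hm0.eventually_lt_const (show (0:ℝ) < 1/16 by norm_num),
    hltop.eventually_gt_atTop (4 * Real.log 8),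
    (hltop.comp (tendsto_add_atTop_nat 1)).eventually_ge_atTop (Real.log (4 * Real.exp 1)),
    (tendsto_add_atTop_nat 1).eventually hLn] with j g1 g2 g3 g4 g5 g6 g7 g8 g9
  have key := step_log (En f (n j)) (En f (n (j + 1))) (m j) (m (j + 1)) M (n (j + 1)) β hM0
    (by positivity) g2 (hE1 j) g3 g1 (hm j).1 g7 (hm (j + 1)).1 g8 hβ g9
    (fun q => step_raw f hf M hM (n (j + 1)) (En f (n j)) g3 (by linarith [hE1 j]) (hm j).1 g6.le
      (hm (j + 1)).1 q)
  have key' : l j * (L (j + 1) - L j - c2) ≤ 8 * l (j + 1) * (L j + c1 +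
    2 * Real.sqrt (Real.sqrt (m j)) / β * L (j + 1)) := key
  show (1 - L j / L (j + 1) - c2 / L (j + 1)) * (8 * (L j / L (j + 1) + c1 / L (j + 1) +
      2 * Real.sqrt (Real.sqrt (m j)) / β))⁻¹ ≤ l (j + 1) / l j
  rw [← div_eq_mul_inv, div_le_div_iff₀ g5 (hlpos j)]
  have e1 : (1 - L j / L (j + 1) - c2 / L (j + 1)) * l j =
      (l j * (L (j + 1) - L j - c2)) / L (j + 1) := by field_simp
  have e2 : l (j + 1) * (8 * (L j / L (j + 1) + c1 / L (j + 1) +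
      2 * Real.sqrt (Real.sqrt (m j)) / β)) = (8 * l (j + 1) * (L j + c1 +
    2 * Real.sqrt (Real.sqrt (m j)) / β * L (j + 1))) / L (j + 1) := by
    field_simp
  rw [e1, e2]
  gcongr
end
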